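/- For every θ > 0 there exist constants C > 0, R₀ > 0, ω₀ > 0 and P₀ > 0 (depending only on θ, V1, V2) with the following property: whenever R > R₀, ω ∈ (0, ω₀) and ω·R > P₀, and φ = (φ1, φ2) is a pair of C² functions on [−R, R] with φ1(−R) = φ1(R) = φ2(−R) = φ2(R) = 0 satisfying L_ω φ = g on (−R, R) for a pair g = (g1, g2) of continuous functions, then sup_{x ∈ [−R,R]} max(|φ1(x)|, |φ2(x)|) ≤ C · ω⁻¹ · ‖g‖_{C⁰_θ((−R,R))}. -/

import Mathlib

/-!
Normalize `sup ‖φ‖ = 1` and suppose that `ω`, `1 / R` and the source are small. Bounded solutions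
of `L_ω φ = g` on `[-R, R]` then converge locally uniformly to bounded solutions of `L_0 ψ = 0`
on `ℝ`, so by nondegeneracy `φ` is close to a multiple `lam • (V1', V2')` of the translation mode
on a fixed core `[-T, T]`. Outside the core the coupling `2 V1 V2` is a small multiple of `V2''`,
and a barrier bounds `φ` there by its values on the core.

It remains to bound `lam`. The symmetry `V1 (-x) = V2 x` allows `φ` to be replaced by its odd part
under `(φ1, φ2) ↦ (φ2 (-·), φ1 (-·))`, which has the same `lam`. The Wronskian of this odd part with
the translation mode times `sinh (ω (R - x)) / cosh (ω R)` vanishes at `R`; at `0` oddness removes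
the unknown derivative of `φ`. Integrating its derivative over `[0, R]` gives
`ω |lam| V1'(0)² ≤ ω · (small) + C ‖g‖`. Altogether `1 = sup ‖φ‖ ≤ 1 / 2 + C ω⁻¹ ‖g‖`.
-/

open Set Filter Topology

/-! ### Compactness of bounded approximate solutions -/

section LinearODE

variable {E : Type*} [NormedAddCommGroup E] [NormedSpace ℝ E] {M : ℝ → E →L[ℝ] E}

theorem norm_le_gronwallBound_of_approx_linear_ode {T K η : ℝ} (hK : 0 ≤ K)
    (hM : ∀ x ∈ Icc 0 T, ‖M x‖ ≤ K) {w w' : ℝ → E}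
    (hw : ∀ x ∈ Icc 0 T, HasDerivAt w (w' x) x)
    (herr : ∀ x ∈ Icc 0 T, ‖w' x - M x (w x)‖ ≤ η) (h0 : ‖w 0‖ ≤ η) {x : ℝ}
    (hx : x ∈ Icc 0 T) : ‖w x‖ ≤ gronwallBound η K η T := by
  have hη : 0 ≤ η := (norm_nonneg _).trans h0
  have hslope : ∀ y ∈ Ico 0 T, ‖w' y‖ ≤ K * ‖w y‖ + η := fun y hy => by
    have hy' := Ico_subset_Icc_self hy
    calc ‖w' y‖ = ‖M y (w y) + (w' y - M y (w y))‖ := by rw [add_sub_cancel]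
      _ ≤ ‖M y (w y)‖ + ‖w' y - M y (w y)‖ := norm_add_le _ _
      _ ≤ K * ‖w y‖ + η := add_le_add ((M y).le_of_opNorm_le (hM y hy') _) (herr y hy')
  have hbound := norm_le_gronwallBound_of_norm_deriv_right_le
    (fun y hy => (hw y hy).continuousAt.continuousWithinAt)
    (fun y hy => (hw y (Ico_subset_Icc_self hy)).hasDerivWithinAt) h0 hslope x hx
  exact hbound.trans (gronwallBound_mono hη hη hK (by linarith [hx.2]))

theorem gronwallBound_mul (t δ K ε x : ℝ) :
    gronwallBound (t * δ) K (t * ε) x = t * gronwallBound δ K ε x := by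
  unfold gronwallBound
  split_ifs <;> ring

theorem exists_bound_of_approx_linear_ode (hM : Continuous M) (T : ℝ) :
    ∃ C, 0 ≤ C ∧ ∀ (η : ℝ) (w w' : ℝ → E), (∀ x ∈ Icc (-T) T, HasDerivAt w (w' x) x) →
      (∀ x ∈ Icc (-T) T, ‖w' x - M x (w x)‖ ≤ η) → ‖w 0‖ ≤ η →
      ∀ x ∈ Icc (-T) T, ‖w x‖ ≤ η * C := by
  obtain ⟨K, hK⟩ := (isCompact_Icc (a := -T) (b := T)).exists_bound_of_continuousOn
    hM.continuousOn
  refine ⟨|gronwallBound 1 |K| 1 T|, abs_nonneg _, fun η w w' hw herr h0 x hx => ?_⟩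
  have hK' : ∀ y ∈ Icc (-T) T, ‖M y‖ ≤ |K| := fun y hy => (hK y hy).trans (le_abs_self K)
  have hneg : ∀ y ∈ Icc 0 T, -y ∈ Icc (-T) T := fun y hy =>
    ⟨by linarith [hy.2], by linarith [hy.1, hy.2]⟩
  have hpos : ∀ y ∈ Icc 0 T, y ∈ Icc (-T) T := fun y hy => ⟨by linarith [hy.1, hy.2], hy.2⟩
  suffices h : ‖w x‖ ≤ gronwallBound (η * 1) |K| (η * 1) T by
    rw [gronwallBound_mul] at h
    exact h.trans (mul_le_mul_of_nonneg_left (le_abs_self _) ((norm_nonneg _).trans h0))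
  rw [mul_one]
  rcases le_total 0 x with h | h
  · exact norm_le_gronwallBound_of_approx_linear_ode (abs_nonneg K)
      (fun y hy => hK' y (hpos y hy)) (fun y hy => hw y (hpos y hy))
      (fun y hy => herr y (hpos y hy)) h0 ⟨h, hx.2⟩
  · have hreflect := norm_le_gronwallBound_of_approx_linear_ode (M := fun y => -M (-y))
      (w := fun y => w (-y)) (w' := fun y => -w' (-y)) (abs_nonneg K)
      (fun y hy => by simpa only [norm_neg] using hK' (-y) (hneg y hy))
      (fun y hy => by
        simpa [Function.comp_def] using (hw (-y) (hneg y hy)).scomp y (hasDerivAt_neg y))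
      (fun y hy => by
        simpa [neg_add_eq_sub, norm_sub_rev] using herr (-y) (hneg y hy))
      (by simpa using h0) (x := -x) ⟨by linarith, by linarith [hx.1]⟩
    simpa only [neg_neg] using hreflect

theorem uniformCauchySeqOn_of_approx_linear_ode (hM : Continuous M) {T : ℝ}
    {u u' : ℕ → ℝ → E} {ε : ℕ → ℝ} {v₀ : E}
    (hu : ∀ᶠ n in atTop, ∀ x ∈ Icc (-T) T,
      HasDerivAt (u n) (u' n x) x ∧ ‖u' n x - M x (u n x)‖ ≤ ε n)
    (hε : Tendsto ε atTop (𝓝 0)) (h0 : Tendsto (fun n => u n 0) atTop (𝓝 v₀)) :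
    UniformCauchySeqOn u atTop (Icc (-T) T) := by
  obtain ⟨C, hC, hbound⟩ := exists_bound_of_approx_linear_ode hM T
  rw [Metric.uniformCauchySeqOn_iff]
  intro δ hδ
  set η := δ / (C + 1) with hη_def
  have hη : 0 < η := by positivity
  have hηC : η * C < δ := by
    rw [hη_def, div_mul_eq_mul_div, div_lt_iff₀ (by linarith)]
    nlinarith
  obtain ⟨N, hN⟩ := eventually_atTop.1 (hu.and (hε.eventually (gt_mem_nhds (half_pos hη))))
  obtain ⟨N', hN'⟩ := Metric.cauchySeq_iff.1 h0.cauchySeq η hη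
  refine ⟨max N N', fun m hm n hn x hx => ?_⟩
  obtain ⟨hm₁, hεm⟩ := hN m ((le_max_left _ _).trans hm)
  obtain ⟨hn₁, hεn⟩ := hN n ((le_max_left _ _).trans hn)
  rw [dist_eq_norm]
  refine (hbound η (fun y => u m y - u n y) (fun y => u' m y - u' n y)
    (fun y hy => (hm₁ y hy).1.sub (hn₁ y hy).1) (fun y hy => ?_) ?_ x hx).trans_lt hηC
  · calc ‖u' m y - u' n y - M y (u m y - u n y)‖
        = ‖(u' m y - M y (u m y)) - (u' n y - M y (u n y))‖ := by rw [map_sub]; congr 1; abel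
      _ ≤ ‖u' m y - M y (u m y)‖ + ‖u' n y - M y (u n y)‖ := norm_sub_le _ _
      _ ≤ η := by linarith [(hm₁ y hy).2, (hn₁ y hy).2]
  · rw [← dist_eq_norm]
    exact (hN' m ((le_max_right _ _).trans hm) n ((le_max_right _ _).trans hn)).le

theorem hasDerivAt_of_tendstoUniformlyOn_approx_linear_ode (hM : Continuous M)
    {u u' : ℕ → ℝ → E} {ε : ℕ → ℝ} {v : ℝ → E}
    (hu : ∀ T : ℝ, ∀ᶠ n in atTop, ∀ x ∈ Icc (-T) T,
      HasDerivAt (u n) (u' n x) x ∧ ‖u' n x - M x (u n x)‖ ≤ ε n)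
    (hε : Tendsto ε atTop (𝓝 0)) (hv : ∀ T, TendstoUniformlyOn u v atTop (Icc (-T) T)) (x : ℝ) :
    HasDerivAt v (M x (v x)) x := by
  set T := |x| + 1
  have hxT : x ∈ Ioo (-T) T := abs_lt.1 (lt_add_one |x|)
  obtain ⟨K, hK⟩ := (isCompact_Icc (a := -T) (b := T)).exists_bound_of_continuousOn
    hM.continuousOn
  have hderiv : TendstoUniformlyOn u' (fun y => M y (v y)) atTop (Ioo (-T) T) := by
    rw [Metric.tendstoUniformlyOn_iff]
    intro δ hδ
    set η := δ / (2 * (|K| + 1)) with hη_def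
    have hη : 0 < η := by positivity
    have hηδ : |K| * η + η = δ / 2 := by rw [hη_def]; field_simp
    filter_upwards [hu T, hε.eventually (gt_mem_nhds (half_pos hδ)),
      Metric.tendstoUniformlyOn_iff.1 (hv T) η hη] with n hn hεn hvn y hy
    have hy := Ioo_subset_Icc_self hy
    have hMy : ‖M y‖ ≤ |K| := (hK y hy).trans (le_abs_self K)
    have hlimit : ‖M y (v y - u n y)‖ ≤ |K| * η :=
      (M y).le_of_opNorm_le_of_le hMy (dist_eq_norm (v y) (u n y) ▸ (hvn y hy).le)
    calc dist (M y (v y)) (u' n y)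
        = ‖M y (v y - u n y) - (u' n y - M y (u n y))‖ := by
          rw [dist_eq_norm, map_sub]; congr 1; abel
      _ ≤ ‖M y (v y - u n y)‖ + ‖u' n y - M y (u n y)‖ := norm_sub_le _ _
      _ < δ := by linarith [(hn y hy).2]
  exact hasDerivAt_of_tendstoUniformlyOn isOpen_Ioo hderiv
    ((hu T).mono fun n hn y hy => (hn y (Ioo_subset_Icc_self hy)).1)
    (fun y hy => (hv T).tendsto_at (Ioo_subset_Icc_self hy)) hxT

theorem exists_limit_of_approx_linear_ode [CompleteSpace E] (hM : Continuous M)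
    {u u' : ℕ → ℝ → E} {ε : ℕ → ℝ} {v₀ : E}
    (hu : ∀ T : ℝ, ∀ᶠ n in atTop, ∀ x ∈ Icc (-T) T,
      HasDerivAt (u n) (u' n x) x ∧ ‖u' n x - M x (u n x)‖ ≤ ε n)
    (hε : Tendsto ε atTop (𝓝 0)) (h0 : Tendsto (fun n => u n 0) atTop (𝓝 v₀)) :
    ∃ v : ℝ → E, (∀ x, HasDerivAt v (M x (v x)) x) ∧
      ∀ T, TendstoUniformlyOn u v atTop (Icc (-T) T) := by
  have hcauchy := fun T => uniformCauchySeqOn_of_approx_linear_ode hM (hu T) hε h0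
  choose v hv using fun x => cauchySeq_tendsto_of_complete
    ((hcauchy |x|).cauchySeq (abs_le.1 le_rfl))
  have hunif := fun T => (hcauchy T).tendstoUniformlyOn_of_tendsto fun x _ => hv x
  exact ⟨v, hasDerivAt_of_tendstoUniformlyOn_approx_linear_ode hM hu hε hunif, hunif⟩

end LinearODE

section SecondOrderSystem

variable {F : Type*} [NormedAddCommGroup F] [NormedSpace ℝ F]

theorem norm_deriv_zero_le_of_norm_deriv_deriv_le {φ p p' : ℝ → F} {K : ℝ}
    (hφ : ∀ x ∈ Icc (0 : ℝ) 1, HasDerivAt φ (p x) x)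
    (hp : ∀ x ∈ Icc (0 : ℝ) 1, HasDerivAt p (p' x) x) (hK : ∀ x ∈ Icc (0 : ℝ) 1, ‖p' x‖ ≤ K) :
    ‖p 0‖ ≤ ‖φ 0‖ + ‖φ 1‖ + K := by
  have hK0 : 0 ≤ K := (norm_nonneg _).trans (hK 0 (by norm_num))
  have hslope : ∀ x ∈ Ico (0 : ℝ) 1, ‖p x - p 0‖ ≤ K := fun x hx =>
    calc ‖p x - p 0‖ ≤ K * (x - 0) := norm_image_sub_le_of_norm_deriv_le_segment'
          (fun y hy => (hp y hy).hasDerivWithinAt) (fun y hy => hK y (Ico_subset_Icc_self hy)) x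
          (Ico_subset_Icc_self hx)
      _ ≤ K := by nlinarith [hx.2]
  have htaylor : ‖(φ 1 - (1 : ℝ) • p 0) - (φ 0 - (0 : ℝ) • p 0)‖ ≤ K :=
    norm_image_sub_le_of_norm_deriv_le_segment_01'
      (f := fun x => φ x - x • p 0) (f' := fun x => p x - p 0)
      (fun x hx => ((hφ x hx).sub (by simpa using (hasDerivAt_id x).smul_const (p 0)))
        |>.hasDerivWithinAt) hslope
  calc ‖p 0‖ = ‖φ 1 - φ 0 - ((φ 1 - (1 : ℝ) • p 0) - (φ 0 - (0 : ℝ) • p 0))‖ := by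
        congr 1; module
    _ ≤ ‖φ 1 - φ 0‖ + ‖(φ 1 - (1 : ℝ) • p 0) - (φ 0 - (0 : ℝ) • p 0)‖ := norm_sub_le _ _
    _ ≤ ‖φ 0‖ + ‖φ 1‖ + K := by linarith [norm_sub_le (φ 1) (φ 0)]

/-- `φ` solves the system `-φ'' + W φ = g` on `(-R, R)`. The derivative `p = φ'` is carried along,
and both are continuous up to the endpoints. -/
structure IsSolution (W : ℝ → F →L[ℝ] F) (R : ℝ) (g φ p : ℝ → F) : Prop where
  continuousOn : ContinuousOn φ (Icc (-R) R)
  continuousOn_deriv : ContinuousOn p (Icc (-R) R)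
  hasDerivAt : ∀ x ∈ Ioo (-R) R, HasDerivAt φ (p x) x
  hasDerivAt_deriv : ∀ x ∈ Ioo (-R) R, HasDerivAt p (W x (φ x) - g x) x

namespace IsSolution

variable {W : ℝ → F →L[ℝ] F} {R : ℝ} {g φ p : ℝ → F}

theorem smul (h : IsSolution W R g φ p) (c : ℝ) :
    IsSolution W R (fun x => c • g x) (fun x => c • φ x) (fun x => c • p x) where
  continuousOn := h.continuousOn.const_smul c
  continuousOn_deriv := h.continuousOn_deriv.const_smul c
  hasDerivAt x hx := (h.hasDerivAt x hx).const_smul c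
  hasDerivAt_deriv x hx :=
    ((h.hasDerivAt_deriv x hx).const_smul c).congr_deriv (by rw [map_smul, smul_sub])

theorem sub {g' φ' p' : ℝ → F} (h : IsSolution W R g φ p) (h' : IsSolution W R g' φ' p') :
    IsSolution W R (fun x => g x - g' x) (fun x => φ x - φ' x) (fun x => p x - p' x) where
  continuousOn := h.continuousOn.sub h'.continuousOn
  continuousOn_deriv := h.continuousOn_deriv.sub h'.continuousOn_deriv
  hasDerivAt x hx := (h.hasDerivAt x hx).sub (h'.hasDerivAt x hx)
  hasDerivAt_deriv x hx := ((h.hasDerivAt_deriv x hx).sub (h'.hasDerivAt_deriv x hx)).congr_deriv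
    (by rw [map_sub]; abel)

theorem reflect (h : IsSolution W R g φ p) (J : F →L[ℝ] F)
    (hJ : ∀ x u, J (W (-x) u) = W x (J u)) :
    IsSolution W R (fun x => J (g (-x))) (fun x => J (φ (-x))) (fun x => -J (p (-x))) where
  continuousOn := J.continuous.comp_continuousOn
    (h.continuousOn.comp continuousOn_neg fun x hx => ⟨by linarith [hx.2], by linarith [hx.1]⟩)
  continuousOn_deriv := (J.continuous.comp_continuousOn
    (h.continuousOn_deriv.comp continuousOn_neg
      fun x hx => ⟨by linarith [hx.2], by linarith [hx.1]⟩)).neg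
  hasDerivAt x hx := by
    have hφ := h.hasDerivAt (-x) ⟨by linarith [hx.2], by linarith [hx.1]⟩
    simpa [Function.comp_def] using J.hasFDerivAt.comp_hasDerivAt x
      (hφ.scomp x (hasDerivAt_neg x))
  hasDerivAt_deriv x hx := by
    have hp := h.hasDerivAt_deriv (-x) ⟨by linarith [hx.2], by linarith [hx.1]⟩
    exact (J.hasFDerivAt.comp_hasDerivAt x (hp.scomp x (hasDerivAt_neg x))).neg.congr_deriv
      (by simp [hJ])

theorem norm_deriv_zero_le (h : IsSolution W R g φ p) {K ε : ℝ} (hR : 1 < R)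
    (hK : ∀ x ∈ Icc (0 : ℝ) 1, ‖W x‖ ≤ K) (hg : ∀ x ∈ Ioo (-R) R, ‖g x‖ ≤ ε)
    (hφ : ∀ x ∈ Icc (-R) R, ‖φ x‖ ≤ 1) : ‖p 0‖ ≤ K + ε + 2 := by
  have hmem : ∀ x ∈ Icc (0 : ℝ) 1, x ∈ Ioo (-R) R := fun x hx =>
    ⟨by linarith [hx.1], by linarith [hx.2]⟩
  have hφ1 : ∀ x ∈ Icc (0 : ℝ) 1, ‖φ x‖ ≤ 1 := fun x hx => hφ x (Ioo_subset_Icc_self (hmem x hx))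
  have hp' : ∀ x ∈ Icc (0 : ℝ) 1, ‖W x (φ x) - g x‖ ≤ K * 1 + ε := fun x hx =>
    (norm_sub_le _ _).trans
      (add_le_add ((W x).le_of_opNorm_le_of_le (hK x hx) (hφ1 x hx)) (hg x (hmem x hx)))
  have hp0 := norm_deriv_zero_le_of_norm_deriv_deriv_le (fun x hx => h.hasDerivAt x (hmem x hx))
    (fun x hx => h.hasDerivAt_deriv x (hmem x hx)) hp'
  linarith [hφ1 0 (by norm_num), hφ1 1 (by norm_num)]

end IsSolution

/-- The coefficient of the first-order system `(φ, p)' = (p, W φ)` equivalent to `φ'' = W φ`. -/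
def companionMap (W : F →L[ℝ] F) : F × F →L[ℝ] F × F :=
  (ContinuousLinearMap.snd ℝ F F).prod (W.comp (ContinuousLinearMap.fst ℝ F F))

@[simp]
theorem companionMap_apply (W : F →L[ℝ] F) (u : F × F) : companionMap W u = (u.2, W u.1) := rfl

theorem continuous_companionMap : Continuous (companionMap (F := F)) := by
  have h : companionMap (F := F) = fun W => (ContinuousLinearMap.inl ℝ F F).comp
      (ContinuousLinearMap.snd ℝ F F) +
      (ContinuousLinearMap.inr ℝ F F).comp (W.comp (ContinuousLinearMap.fst ℝ F F)) := by
    funext W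
    ext <;> simp
  rw [h]
  fun_prop

theorem exists_subseq_tendsto_solution [ProperSpace F] {W : ℝ → F →L[ℝ] F} (hW : Continuous W)
    {R ε : ℕ → ℝ} {g φ p : ℕ → ℝ → F} (hR : Tendsto R atTop atTop) (hε : Tendsto ε atTop (𝓝 0))
    (hsol : ∀ n, IsSolution W (R n) (g n) (φ n) (p n))
    (hg : ∀ n, ∀ x ∈ Ioo (-R n) (R n), ‖g n x‖ ≤ ε n)
    (hφ : ∀ n, ∀ x ∈ Icc (-R n) (R n), ‖φ n x‖ ≤ 1) :
    ∃ (ψ q : ℝ → F) (k : ℕ → ℕ), StrictMono k ∧ (∀ x, HasDerivAt ψ (q x) x) ∧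
      (∀ x, HasDerivAt q (W x (ψ x)) x) ∧
      ∀ T, TendstoUniformlyOn (fun n => φ (k n)) ψ atTop (Icc (-T) T) := by
  obtain ⟨K, hK⟩ := (isCompact_Icc (a := (0 : ℝ)) (b := 1)).exists_bound_of_continuousOn
    hW.continuousOn
  have hinit : ∀ᶠ n in atTop, (φ n 0, p n 0) ∈ Metric.closedBall (0 : F × F) (K + 3) := by
    filter_upwards [hR.eventually_gt_atTop 1, hε.eventually (gt_mem_nhds one_pos)] with n hRn hεn
    have hp0 := (hsol n).norm_deriv_zero_le hRn hK (hg n) (hφ n)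
    have hφ0 := hφ n 0 ⟨by linarith, by linarith⟩
    have hK0 : 0 ≤ K := (norm_nonneg _).trans (hK 0 (by norm_num))
    rw [mem_closedBall_zero_iff, norm_prod_le_iff]
    exact ⟨by linarith, by linarith⟩
  obtain ⟨v₀, -, k, hk, hv₀⟩ := tendsto_subseq_of_frequently_bounded
    Metric.isBounded_closedBall hinit.frequently
  obtain ⟨v, hv, hlim⟩ := exists_limit_of_approx_linear_ode (M := fun x => companionMap (W x))
    (continuous_companionMap.comp hW) (u := fun n x => (φ (k n) x, p (k n) x))
    (u' := fun n x => (p (k n) x, W x (φ (k n) x) - g (k n) x)) (ε := ε ∘ k)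
    (fun T => by
      filter_upwards [(hR.comp hk.tendsto_atTop).eventually_gt_atTop T] with n hn x hx
      have hx' : x ∈ Ioo (-R (k n)) (R (k n)) :=
        ⟨(neg_lt_neg hn).trans_le hx.1, hx.2.trans_lt hn⟩
      refine ⟨((hsol _).hasDerivAt x hx').prodMk ((hsol _).hasDerivAt_deriv x hx'), ?_⟩
      simpa [Prod.norm_def] using hg _ x hx') (hε.comp hk.tendsto_atTop) hv₀
  exact ⟨fun x => (v x).1, fun x => (v x).2, k, hk,
    fun x => by simpa using (hv x).hasFDerivAt.fst.hasDerivAt,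
    fun x => by simpa using (hv x).hasFDerivAt.snd.hasDerivAt,
    fun T => uniformContinuous_fst.comp_tendstoUniformlyOn (hlim T)⟩

theorem exists_global_solution_near [ProperSpace F] {W : ℝ → F →L[ℝ] F} (hW : Continuous W) (T : ℝ)
    {δ : ℝ} (hδ : 0 < δ) :
    ∃ N : ℝ, 0 < N ∧ ∀ (R : ℝ) (g φ p : ℝ → F), N < R → IsSolution W R g φ p →
      (∀ x ∈ Ioo (-R) R, ‖g x‖ ≤ N⁻¹) → (∀ x ∈ Icc (-R) R, ‖φ x‖ ≤ 1) →
      ∃ ψ q : ℝ → F, (∀ x, HasDerivAt ψ (q x) x) ∧ (∀ x, HasDerivAt q (W x (ψ x)) x) ∧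
        (∀ x, ‖ψ x‖ ≤ 1) ∧ ∀ x ∈ Icc (-T) T, ‖φ x - ψ x‖ ≤ δ := by
  by_contra! hfail
  choose R g φ p hR hsol hg hφ hfar using fun n : ℕ => hfail (n + 1) n.cast_add_one_pos
  have hR' : Tendsto R atTop atTop :=
    tendsto_atTop_mono (fun n => ((lt_add_one (n : ℝ)).trans (hR n)).le)
      tendsto_natCast_atTop_atTop
  obtain ⟨ψ, q, k, hk, hψ, hq, hlim⟩ := exists_subseq_tendsto_solution hW hR'
    (by simpa only [one_div] using tendsto_one_div_add_atTop_nhds_zero_nat (𝕜 := ℝ)) hsol hg hφ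
  have hψ1 : ∀ x, ‖ψ x‖ ≤ 1 := fun x => by
    refine le_of_tendsto ((hlim |x|).tendsto_at (abs_le.1 le_rfl)).norm ?_
    filter_upwards [(hR'.comp hk.tendsto_atTop).eventually_ge_atTop |x|] with n hn
    exact hφ (k n) x (abs_le.1 hn)
  obtain ⟨n, hn⟩ := (Metric.tendstoUniformlyOn_iff.1 (hlim T) δ hδ).exists
  obtain ⟨x, hx, hδx⟩ := hfar (k n) ψ q hψ hq hψ1
  rw [← dist_eq_norm, dist_comm] at hδx
  exact (hn x hx).not_gt hδx

end SecondOrderSystem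

/-! ### Maximum principle -/

section MaximumPrinciple

theorem deriv_deriv_nonneg_of_isLocalMin {f f' : ℝ → ℝ} {f'' a : ℝ}
    (hf : ∀ᶠ x in 𝓝 a, HasDerivAt f (f' x) x) (hf' : HasDerivAt f' f'' a) (hmin : IsLocalMin f a) :
    0 ≤ f'' := by
  by_contra! hneg
  have hderiv : deriv f =ᶠ[𝓝 a] f' := hf.mono fun x hx => hx.deriv
  have hderiv2 : deriv (deriv f) a = f'' := hderiv.deriv_eq.trans hf'.deriv
  have hmax : IsLocalMax f a := isLocalMax_of_deriv_deriv_neg (hderiv2 ▸ hneg)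
    hmin.deriv_eq_zero hf.self_of_nhds.continuousAt
  have hconst : f =ᶠ[𝓝 a] fun _ => f a := by
    filter_upwards [hmin, hmax] with x hx₁ hx₂ using le_antisymm hx₂ hx₁
  have hzero : deriv (deriv f) a = 0 := by simpa using hconst.deriv.deriv_eq
  exact hneg.ne (hderiv2 ▸ hzero)

variable {f f' b b' b'' c r : ℝ → ℝ} {s t : ℝ}

theorem nonneg_of_deriv_deriv_neg {f'' : ℝ → ℝ} (hf : ContinuousOn f (Icc s t))
    (hf' : ∀ x ∈ Ioo s t, HasDerivAt f (f' x) x) (hf'' : ∀ x ∈ Ioo s t, HasDerivAt f' (f'' x) x)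
    (hneg : ∀ x ∈ Ioo s t, f x < 0 → f'' x < 0) (hs : 0 ≤ f s) (ht : 0 ≤ f t) :
    ∀ x ∈ Icc s t, 0 ≤ f x := by
  intro x hx
  obtain ⟨y, hy, hmin⟩ := isCompact_Icc.exists_isMinOn ⟨x, hx⟩ hf
  refine le_trans ?_ (hmin hx)
  by_contra! hfy
  have hy' : y ∈ Ioo s t := by
    refine ⟨hy.1.lt_of_ne ?_, hy.2.lt_of_ne ?_⟩ <;> rintro rfl
    exacts [hfy.not_ge hs, hfy.not_ge ht]
  have hnhds : Ioo s t ∈ 𝓝 y := isOpen_Ioo.mem_nhds hy'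
  exact (hneg y hy' hfy).not_ge <| deriv_deriv_nonneg_of_isLocalMin
    (eventually_of_mem hnhds hf') (hf'' y hy')
    (hmin.isLocalMin (mem_of_superset hnhds Ioo_subset_Icc_self))

theorem le_of_barrier (hf : ContinuousOn f (Icc s t)) (hb : ContinuousOn b (Icc s t))
    (hf' : ∀ x ∈ Ioo s t, HasDerivAt f (f' x) x)
    (hf'' : ∀ x ∈ Ioo s t, HasDerivAt f' (c x * f x + r x) x)
    (hb' : ∀ x ∈ Ioo s t, HasDerivAt b (b' x) x) (hb'' : ∀ x ∈ Ioo s t, HasDerivAt b' (b'' x) x)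
    (hc : ∀ x ∈ Ioo s t, 0 < c x) (hb0 : ∀ x ∈ Ioo s t, 0 ≤ b x)
    (hr : ∀ x ∈ Ioo s t, b'' x ≤ r x) (hs : f s ≤ b s) (ht : f t ≤ b t) :
    ∀ x ∈ Icc s t, f x ≤ b x := fun x hx =>
  sub_nonneg.1 <| nonneg_of_deriv_deriv_neg (f := fun x => b x - f x) (hb.sub hf)
    (fun y hy => (hb' y hy).sub (hf' y hy)) (fun y hy => (hb'' y hy).sub (hf'' y hy))
    (fun y hy hlt => by
      have hfy : 0 < c y * f y := mul_pos (hc y hy) (by linarith [hb0 y hy])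
      linarith [hr y hy])
    (sub_nonneg.2 hs) (sub_nonneg.2 ht) x hx

theorem abs_le_of_barrier (hf : ContinuousOn f (Icc s t)) (hb : ContinuousOn b (Icc s t))
    (hf' : ∀ x ∈ Ioo s t, HasDerivAt f (f' x) x)
    (hf'' : ∀ x ∈ Ioo s t, HasDerivAt f' (c x * f x + r x) x)
    (hb' : ∀ x ∈ Ioo s t, HasDerivAt b (b' x) x) (hb'' : ∀ x ∈ Ioo s t, HasDerivAt b' (b'' x) x)
    (hc : ∀ x ∈ Ioo s t, 0 < c x) (hb0 : ∀ x ∈ Ioo s t, 0 ≤ b x)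
    (hr : ∀ x ∈ Ioo s t, |r x| ≤ -b'' x) (hs : |f s| ≤ b s) (ht : |f t| ≤ b t) :
    ∀ x ∈ Icc s t, |f x| ≤ b x := fun x hx =>
  abs_le'.2 ⟨
    le_of_barrier hf hb hf' hf'' hb' hb'' hc hb0
      (fun y hy => by linarith [(abs_le.1 (hr y hy)).1])
      ((le_abs_self _).trans hs) ((le_abs_self _).trans ht) x hx,
    le_of_barrier (f := fun y => -f y) (r := fun y => -r y) hf.neg hb
      (fun y hy => (hf' y hy).neg)
      (fun y hy => (hf'' y hy).neg.congr_deriv (by ring)) hb' hb'' hc hb0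
      (fun y hy => by linarith [(abs_le.1 (hr y hy)).2])
      ((neg_le_abs _).trans hs) ((neg_le_abs _).trans ht) x hx⟩

end MaximumPrinciple

/-! ### Segregation profiles and the linearized operator -/

/-- `V1`, `V2` is a segregation profile: a positive solution of `V1'' = V1 V2²`, `V2'' = V2 V1²`
with `V1` increasing and `V2` the mirror image of `V1`; `V1` carries the equation, and its mirror
image is `hasDerivAt_deriv_snd`. -/
structure SegregationProfile (V1 V2 : ℝ → ℝ) : Prop where
  contDiff : ContDiff ℝ 2 V1
  pos : ∀ x, 0 < V1 x
  deriv_pos : ∀ x, 0 < deriv V1 x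
  reflect : ∀ x, V1 (-x) = V2 x
  deriv_deriv : ∀ x, deriv (deriv V1) x = V1 x * V2 x ^ 2

namespace SegregationProfile

variable {V1 V2 : ℝ → ℝ} {x T R : ℝ}

theorem hasDerivAt_fst (h : SegregationProfile V1 V2) (x : ℝ) : HasDerivAt V1 (deriv V1 x) x :=
  (h.contDiff.differentiable two_ne_zero x).hasDerivAt

theorem hasDerivAt_deriv_fst (h : SegregationProfile V1 V2) (x : ℝ) :
    HasDerivAt (deriv V1) (V1 x * V2 x ^ 2) x :=
  h.deriv_deriv x ▸
    ((contDiff_succ_iff_deriv.1 h.contDiff).2.2.differentiable one_ne_zero x).hasDerivAt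

theorem eq_comp_neg (h : SegregationProfile V1 V2) : V2 = fun x => V1 (-x) :=
  funext fun x => (h.reflect x).symm

theorem reflect_snd (h : SegregationProfile V1 V2) (x : ℝ) : V2 (-x) = V1 x := by
  rw [← h.reflect, neg_neg]

theorem deriv_snd (h : SegregationProfile V1 V2) (x : ℝ) : deriv V2 x = -deriv V1 (-x) := by
  rw [h.eq_comp_neg, deriv_comp_neg]

theorem hasDerivAt_snd (h : SegregationProfile V1 V2) (x : ℝ) : HasDerivAt V2 (deriv V2 x) x := by
  rw [h.deriv_snd, h.eq_comp_neg]
  simpa [Function.comp_def] using (h.hasDerivAt_fst (-x)).comp x (hasDerivAt_neg x)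

theorem hasDerivAt_deriv_snd (h : SegregationProfile V1 V2) (x : ℝ) :
    HasDerivAt (deriv V2) (V2 x * V1 x ^ 2) x := by
  rw [funext h.deriv_snd]
  exact ((h.hasDerivAt_deriv_fst (-x)).comp x (hasDerivAt_neg x)).neg.congr_deriv
    (by rw [h.reflect, h.reflect_snd]; ring)

protected theorem continuous_fst (h : SegregationProfile V1 V2) : Continuous V1 :=
  h.contDiff.continuous

protected theorem continuous_snd (h : SegregationProfile V1 V2) : Continuous V2 :=
  h.eq_comp_neg ▸ h.continuous_fst.comp continuous_neg

theorem snd_pos (h : SegregationProfile V1 V2) (x : ℝ) : 0 < V2 x := h.reflect x ▸ h.pos (-x)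

theorem strictMono_fst (h : SegregationProfile V1 V2) : StrictMono V1 :=
  strictMono_of_deriv_pos h.deriv_pos

theorem strictAnti_snd (h : SegregationProfile V1 V2) : StrictAnti V2 :=
  h.eq_comp_neg ▸ fun _ _ hxy => h.strictMono_fst (neg_lt_neg hxy)

theorem strictMono_deriv (h : SegregationProfile V1 V2) : StrictMono (deriv V1) := by
  refine strictMono_of_deriv_pos fun x => ?_
  rw [h.deriv_deriv]
  exact mul_pos (h.pos x) (pow_pos (h.snd_pos x) 2)

theorem snd_le_fst (h : SegregationProfile V1 V2) (hx : 0 ≤ x) : V2 x ≤ V1 x :=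
  h.reflect x ▸ h.strictMono_fst.monotone (by linarith)

theorem deriv_mul_sub_le (h : SegregationProfile V1 V2) {x y : ℝ} (hxy : x ≤ y) :
    deriv V1 x * (y - x) ≤ V1 y - V1 x :=
  (convex_Ici x).mul_sub_le_image_sub_of_le_deriv h.continuous_fst.continuousOn
    (fun z _ => (h.hasDerivAt_fst z).differentiableAt.differentiableWithinAt)
    (fun _ hz => h.strictMono_deriv.monotone (interior_subset hz)) x self_mem_Ici y hxy hxy

theorem deriv_neg_mul_le (h : SegregationProfile V1 V2) (hT : 0 ≤ T) :
    deriv V1 (-T) * T ≤ V1 0 := by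
  have hconvex := h.deriv_mul_sub_le (neg_nonpos.2 hT)
  linarith [h.pos (-T)]

theorem deriv_zero_mul_le (h : SegregationProfile V1 V2) (hT : 0 ≤ T) : deriv V1 0 * T ≤ V1 T := by
  have hconvex := h.deriv_mul_sub_le hT
  linarith [h.pos 0]

theorem antitoneOn_deriv_add_deriv_neg (h : SegregationProfile V1 V2) :
    AntitoneOn (fun x => deriv V1 x + deriv V1 (-x)) (Ici 0) := by
  have hderiv : ∀ x, HasDerivAt (fun x => deriv V1 x + deriv V1 (-x))
      (V1 x * V2 x * (V2 x - V1 x)) x := fun x =>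
    ((h.hasDerivAt_deriv_fst x).add
      ((h.hasDerivAt_deriv_fst (-x)).comp x (hasDerivAt_neg x))).congr_deriv
      (by rw [h.reflect, h.reflect_snd]; ring)
  refine antitoneOn_of_hasDerivWithinAt_nonpos (convex_Ici 0)
    (fun x _ => (hderiv x).continuousAt.continuousWithinAt)
    (fun x _ => (hderiv x).hasDerivWithinAt) fun x hx => ?_
  exact mul_nonpos_of_nonneg_of_nonpos (mul_pos (h.pos x) (h.snd_pos x)).le
    (sub_nonpos.2 (h.snd_le_fst (interior_subset hx)))

theorem deriv_add_deriv_neg_le (h : SegregationProfile V1 V2) (x : ℝ) :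
    deriv V1 x + deriv V1 (-x) ≤ 2 * deriv V1 0 := by
  wlog hx : 0 ≤ x generalizing x
  · simpa [add_comm] using this (-x) (by linarith)
  simpa [two_mul] using h.antitoneOn_deriv_add_deriv_neg self_mem_Ici hx hx

theorem deriv_add_deriv_sub_le (h : SegregationProfile V1 V2) (hT : 0 ≤ T) (hTR : T ≤ R) :
    (deriv V1 R + deriv V2 R) - (deriv V1 T + deriv V2 T) ≤ 2 * deriv V1 (-T) := by
  have hanti := h.antitoneOn_deriv_add_deriv_neg hT (hT.trans hTR) hTR
  simp only at hanti
  rw [h.deriv_snd, h.deriv_snd]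
  linarith [h.deriv_pos (-R)]

end SegregationProfile

/-- The zeroth-order coefficient of the linearized operator,
`L_ω φ = -φ'' + potential V1 V2 ω φ`. -/
def potential (V1 V2 : ℝ → ℝ) (ω x : ℝ) : ℝ × ℝ →L[ℝ] ℝ × ℝ :=
  (V2 x ^ 2 + ω ^ 2) • (ContinuousLinearMap.inl ℝ ℝ ℝ).comp (ContinuousLinearMap.fst ℝ ℝ ℝ) +
  (V1 x ^ 2 + ω ^ 2) • (ContinuousLinearMap.inr ℝ ℝ ℝ).comp (ContinuousLinearMap.snd ℝ ℝ ℝ) +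
  (2 * V1 x * V2 x) • ((ContinuousLinearMap.inl ℝ ℝ ℝ).comp (ContinuousLinearMap.snd ℝ ℝ ℝ) +
    (ContinuousLinearMap.inr ℝ ℝ ℝ).comp (ContinuousLinearMap.fst ℝ ℝ ℝ))

/-- The translation mode `(V1', V2')`, which spans the bounded kernel of `L_0`. -/
noncomputable def kernel (V1 V2 : ℝ → ℝ) (x : ℝ) : ℝ × ℝ := (deriv V1 x, deriv V2 x)

/-- The derivative of `kernel V1 V2` along a segregation profile. -/
def kernelDeriv (V1 V2 : ℝ → ℝ) (x : ℝ) : ℝ × ℝ := (V1 x * V2 x ^ 2, V2 x * V1 x ^ 2)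

/-- The Euclidean inner product on `ℝ × ℝ`, whose norm here is the maximum norm. -/
def pairing (u v : ℝ × ℝ) : ℝ := u.1 * v.1 + u.2 * v.2

theorem abs_pairing_le (u v : ℝ × ℝ) : |pairing u v| ≤ ‖u‖ * (|v.1| + |v.2|) :=
  calc |pairing u v| ≤ |u.1| * |v.1| + |u.2| * |v.2| := by
        rw [← abs_mul, ← abs_mul]; exact abs_add_le _ _
    _ ≤ ‖u‖ * |v.1| + ‖u‖ * |v.2| := by
        gcongr
        exacts [norm_fst_le u, norm_snd_le u]
    _ = ‖u‖ * (|v.1| + |v.2|) := (mul_add _ _ _).symm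

theorem norm_swap (u : ℝ × ℝ) : ‖u.swap‖ = ‖u‖ := by
  simp [Prod.norm_def, max_comm]

theorem hasDerivAt_prodFst {f : ℝ → ℝ × ℝ} {f' : ℝ × ℝ} {x : ℝ} (hf : HasDerivAt f f' x) :
    HasDerivAt (fun x => (f x).1) f'.1 x := by
  simpa using hf.hasFDerivAt.fst.hasDerivAt

theorem hasDerivAt_prodSnd {f : ℝ → ℝ × ℝ} {f' : ℝ × ℝ} {x : ℝ} (hf : HasDerivAt f f' x) :
    HasDerivAt (fun x => (f x).2) f'.2 x := by
  simpa using hf.hasFDerivAt.snd.hasDerivAt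

theorem hasDerivAt_pairing {u v : ℝ → ℝ × ℝ} {u' v' : ℝ × ℝ} {x : ℝ} (hu : HasDerivAt u u' x)
    (hv : HasDerivAt v v' x) :
    HasDerivAt (fun x => pairing (u x) (v x)) (pairing u' (v x) + pairing (u x) v') x :=
  (((hasDerivAt_prodFst hu).mul (hasDerivAt_prodFst hv)).add
    ((hasDerivAt_prodSnd hu).mul (hasDerivAt_prodSnd hv))).congr_deriv
    (by simp only [pairing]; ring)

section Potential

variable {V1 V2 : ℝ → ℝ} {ω x R : ℝ} {g φ p : ℝ → ℝ × ℝ}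

@[simp]
theorem potential_apply (u : ℝ × ℝ) :
    potential V1 V2 ω x u = ((V2 x ^ 2 + ω ^ 2) * u.1 + 2 * V1 x * V2 x * u.2,
      (V1 x ^ 2 + ω ^ 2) * u.2 + 2 * V1 x * V2 x * u.1) := by
  ext <;> simp [potential]

theorem potential_zero_apply (u : ℝ × ℝ) :
    potential V1 V2 0 x u = potential V1 V2 ω x u - ω ^ 2 • u := by
  ext <;> simp only [potential_apply, Prod.fst_sub, Prod.snd_sub, Prod.smul_fst, Prod.smul_snd,
    smul_eq_mul] <;> ring

theorem IsSolution.to_zero_frequency (hs : IsSolution (potential V1 V2 ω) R g φ p) :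
    IsSolution (potential V1 V2 0) R (fun x => g x - ω ^ 2 • φ x) φ p where
  __ := hs
  hasDerivAt_deriv x hx := (hs.hasDerivAt_deriv x hx).congr_deriv
    (by rw [potential_zero_apply (ω := ω)]; abel)

end Potential

/-- A supersolution on `[T, ∞)`. The term in `V2` absorbs the coupling `2 V1 V2`, because
`V2'' = V2 V1²` and `V1 ≥ V1 T` there; the exponential absorbs a source of size `G e^{-θ x}`. -/
noncomputable def outerBarrier (V1 V2 : ℝ → ℝ) (θ μ G T x : ℝ) : ℝ :=
  μ + 2 / V1 T * (V2 T - V2 x) + G / θ ^ 2 * (1 - Real.exp (-(θ * x)))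

theorem hasDerivAt_exp_neg_mul (θ x : ℝ) :
    HasDerivAt (fun x => Real.exp (-(θ * x))) (-(θ * Real.exp (-(θ * x)))) x :=
  (((hasDerivAt_id x).const_mul θ).neg.exp).congr_deriv (by simp [mul_comm])

namespace SegregationProfile

variable {V1 V2 : ℝ → ℝ} {x T R ω θ G μ : ℝ} {g φ p : ℝ → ℝ × ℝ}

theorem continuous_potential (h : SegregationProfile V1 V2) (ω : ℝ) :
    Continuous (potential V1 V2 ω) := by
  have h1 := h.continuous_fst
  have h2 := h.continuous_snd
  unfold potential
  fun_prop

theorem hasDerivAt_kernel (h : SegregationProfile V1 V2) (x : ℝ) :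
    HasDerivAt (kernel V1 V2) (kernelDeriv V1 V2 x) x :=
  (h.hasDerivAt_deriv_fst x).prodMk (h.hasDerivAt_deriv_snd x)

theorem hasDerivAt_kernelDeriv (h : SegregationProfile V1 V2) (x : ℝ) :
    HasDerivAt (kernelDeriv V1 V2) (potential V1 V2 0 x (kernel V1 V2 x)) x := by
  have h1 := h.hasDerivAt_fst x
  have h2 := h.hasDerivAt_snd x
  refine ((h1.mul (h2.pow 2)).prodMk (h2.mul (h1.pow 2))).congr_deriv ?_
  ext <;> simp [kernel] <;> ring

theorem swap_kernel_neg (h : SegregationProfile V1 V2) (x : ℝ) :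
    (kernel V1 V2 (-x)).swap = -kernel V1 V2 x := by
  ext <;> simp [kernel, h.deriv_snd]

theorem abs_kernel_add_abs_le (h : SegregationProfile V1 V2) (x : ℝ) :
    |(kernel V1 V2 x).1| + |(kernel V1 V2 x).2| ≤ 2 * deriv V1 0 := by
  simpa [kernel, h.deriv_snd, abs_of_pos (h.deriv_pos _)] using h.deriv_add_deriv_neg_le x

theorem norm_kernel_le (h : SegregationProfile V1 V2) (x : ℝ) :
    ‖kernel V1 V2 x‖ ≤ 2 * deriv V1 0 := by
  have hsum := h.abs_kernel_add_abs_le x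
  refine norm_prod_le_iff.2 ⟨?_, ?_⟩ <;> rw [Real.norm_eq_abs]
  exacts [by linarith [abs_nonneg (kernel V1 V2 x).2], by linarith [abs_nonneg (kernel V1 V2 x).1]]

theorem abs_kernelDeriv_add_abs (h : SegregationProfile V1 V2) (x : ℝ) :
    |(kernelDeriv V1 V2 x).1| + |(kernelDeriv V1 V2 x).2| =
      V1 x * V2 x ^ 2 + V2 x * V1 x ^ 2 := by
  have h1 := h.pos x
  have h2 := h.snd_pos x
  simp only [kernelDeriv]
  rw [abs_of_pos (by positivity), abs_of_pos (by positivity)]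

theorem reflect_solution (h : SegregationProfile V1 V2)
    (hs : IsSolution (potential V1 V2 ω) R g φ p) :
    IsSolution (potential V1 V2 ω) R (fun x => (g (-x)).swap) (fun x => (φ (-x)).swap)
      (fun x => -(p (-x)).swap) :=
  hs.reflect (ContinuousLinearEquiv.prodComm ℝ ℝ ℝ) fun x u => by
    ext <;> simp [h.reflect, h.reflect_snd, mul_right_comm 2 (V2 x)]

theorem antisymmetrize_solution (h : SegregationProfile V1 V2)
    (hs : IsSolution (potential V1 V2 ω) R g φ p) :
    IsSolution (potential V1 V2 ω) R
      (fun x => (1 / 2 : ℝ) • (g x - (g (-x)).swap)) (fun x => (1 / 2 : ℝ) • (φ x - (φ (-x)).swap))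
      (fun x => (1 / 2 : ℝ) • (p x - -(p (-x)).swap)) :=
  (hs.sub (h.reflect_solution hs)).smul (1 / 2)

theorem outerBarrier_le (h : SegregationProfile V1 V2) (hG : 0 ≤ G) (x : ℝ) :
    outerBarrier V1 V2 θ μ G T x ≤ μ + 2 * V2 T / V1 T + G / θ ^ 2 := by
  have hV : 0 ≤ 2 / V1 T * V2 x := (mul_pos (div_pos two_pos (h.pos T)) (h.snd_pos x)).le
  have hE : 0 ≤ G / θ ^ 2 * Real.exp (-(θ * x)) := by positivity
  rw [outerBarrier, mul_div_right_comm]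
  linarith

theorem le_outerBarrier (h : SegregationProfile V1 V2) (hθ : 0 < θ) (hG : 0 ≤ G) (hT : 0 ≤ T)
    (hTx : T ≤ x) : μ ≤ outerBarrier V1 V2 θ μ G T x := by
  have hV : 0 ≤ 2 / V1 T * (V2 T - V2 x) := mul_nonneg (div_pos two_pos (h.pos T)).le
    (sub_nonneg.2 (h.strictAnti_snd.antitone hTx))
  have hE : 0 ≤ G / θ ^ 2 * (1 - Real.exp (-(θ * x))) := mul_nonneg (by positivity)
    (sub_nonneg.2 (Real.exp_le_one_iff.2 (by nlinarith)))
  rw [outerBarrier]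
  linarith

theorem hasDerivAt_outerBarrier (h : SegregationProfile V1 V2) (hθ : 0 < θ) (x : ℝ) :
    HasDerivAt (outerBarrier V1 V2 θ μ G T)
      (-(2 / V1 T * deriv V2 x) + G / θ * Real.exp (-(θ * x))) x :=
  ((((h.hasDerivAt_snd x).const_sub (V2 T)).const_mul (2 / V1 T)).const_add μ |>.add
    (((hasDerivAt_exp_neg_mul θ x).const_sub 1).const_mul (G / θ ^ 2))).congr_deriv
    (by field_simp)

theorem hasDerivAt_deriv_outerBarrier (h : SegregationProfile V1 V2) (hθ : 0 < θ) (x : ℝ) :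
    HasDerivAt (fun x => -(2 / V1 T * deriv V2 x) + G / θ * Real.exp (-(θ * x)))
      (-(2 / V1 T * (V2 x * V1 x ^ 2) + G * Real.exp (-(θ * x)))) x :=
  (((h.hasDerivAt_deriv_snd x).const_mul (2 / V1 T)).neg.add
    ((hasDerivAt_exp_neg_mul θ x).const_mul (G / θ))).congr_deriv (by field_simp; ring)

theorem abs_le_of_outer (h : SegregationProfile V1 V2) {f f' c r : ℝ → ℝ} (hT : 0 ≤ T)
    (hθ : 0 < θ) (hG : 0 ≤ G) (hf : ContinuousOn f (Icc T R))
    (hf' : ∀ x ∈ Ioo T R, HasDerivAt f (f' x) x)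
    (hf'' : ∀ x ∈ Ioo T R, HasDerivAt f' (c x * f x + r x) x) (hc : ∀ x ∈ Ioo T R, 0 < c x)
    (hr : ∀ x ∈ Ioo T R, |r x| ≤ 2 * V1 x * V2 x + G * Real.exp (-(θ * x)))
    (hfT : |f T| ≤ μ) (hfR : f R = 0) (hx : x ∈ Icc T R) :
    |f x| ≤ μ + 2 * V2 T / V1 T + G / θ ^ 2 := by
  have hμ : 0 ≤ μ := (abs_nonneg _).trans hfT
  have hμb : ∀ y, T ≤ y → μ ≤ outerBarrier V1 V2 θ μ G T y := fun y hy =>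
    h.le_outerBarrier hθ hG hT hy
  have hcoupling : ∀ y ∈ Ioo T R, 2 * V1 y * V2 y ≤ 2 / V1 T * (V2 y * V1 y ^ 2) := fun y hy => by
    have hV1 : 2 ≤ 2 / V1 T * V1 y := by
      rw [div_mul_eq_mul_div, le_div_iff₀ (h.pos T)]
      linarith [h.strictMono_fst hy.1]
    nlinarith [mul_pos (h.pos y) (h.snd_pos y)]
  exact (abs_le_of_barrier hf
    (fun y _ => (h.hasDerivAt_outerBarrier hθ y).continuousAt.continuousWithinAt) hf' hf''
    (fun y _ => h.hasDerivAt_outerBarrier hθ y)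
    (fun y _ => h.hasDerivAt_deriv_outerBarrier hθ y) hc (fun y hy => hμ.trans (hμb y hy.1.le))
    (fun y hy => by linarith [hr y hy, hcoupling y hy]) (hfT.trans (hμb T le_rfl))
    (by rw [hfR, abs_zero]; exact hμ.trans (hμb R (hx.1.trans hx.2))) x hx).trans
    (h.outerBarrier_le hG x)

theorem norm_le_right (h : SegregationProfile V1 V2)
    (hs : IsSolution (potential V1 V2 ω) R g φ p) (hT : 0 ≤ T) (hTR : T < R) (hθ : 0 < θ)
    (hG : 0 ≤ G) (hg : ∀ x ∈ Ioo (-R) R, ‖g x‖ ≤ G * Real.exp (-(θ * |x|)))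
    (hφ : ∀ x ∈ Icc (-R) R, ‖φ x‖ ≤ 1) (hφT : ‖φ T‖ ≤ μ) (hφR : φ R = 0) :
    ∀ x ∈ Icc T R, ‖φ x‖ ≤ μ + 2 * V2 T / V1 T + G / θ ^ 2 := by
  have hsub : Ioo T R ⊆ Ioo (-R) R := Ioo_subset_Ioo_left (by linarith)
  have hcont : ContinuousOn φ (Icc T R) := hs.continuousOn.mono (Icc_subset_Icc_left (by linarith))
  have hr : ∀ x ∈ Ioo T R, ∀ u v : ℝ, |u| ≤ ‖φ x‖ → |v| ≤ ‖g x‖ →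
      |2 * V1 x * V2 x * u - v| ≤ 2 * V1 x * V2 x + G * Real.exp (-(θ * x)) := by
    intro x hx u v hu hv
    have hV := mul_pos (mul_pos two_pos (h.pos x)) (h.snd_pos x)
    have hv' := hv.trans (hg x (hsub hx))
    rw [abs_of_nonneg (hT.trans hx.1.le)] at hv'
    calc |2 * V1 x * V2 x * u - v| ≤ |2 * V1 x * V2 x * u| + |v| := abs_sub _ _
      _ = 2 * V1 x * V2 x * |u| + |v| := by rw [abs_mul, abs_of_pos hV]
      _ ≤ 2 * V1 x * V2 x * 1 + G * Real.exp (-(θ * x)) :=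
        add_le_add (mul_le_mul_of_nonneg_left
          (hu.trans (hφ x (Ioo_subset_Icc_self (hsub hx)))) hV.le) hv'
      _ = _ := by rw [mul_one]
  intro x hx
  refine norm_prod_le_iff.2 ⟨?_, ?_⟩
  · exact h.abs_le_of_outer (f := fun x => (φ x).1) (f' := fun x => (p x).1)
      (c := fun x => V2 x ^ 2 + ω ^ 2) (r := fun x => 2 * V1 x * V2 x * (φ x).2 - (g x).1)
      hT hθ hG (continuous_fst.comp_continuousOn hcont)
      (fun y hy => hasDerivAt_prodFst (hs.hasDerivAt y (hsub hy)))
      (fun y hy => (hasDerivAt_prodFst (hs.hasDerivAt_deriv y (hsub hy))).congr_deriv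
        (by simp; ring))
      (fun y _ => by have := h.snd_pos y; positivity)
      (fun y hy => hr y hy _ _ (norm_snd_le (φ y)) (norm_fst_le (g y)))
      ((norm_fst_le _).trans hφT) (by rw [hφR, Prod.fst_zero]) hx
  · exact h.abs_le_of_outer (f := fun x => (φ x).2) (f' := fun x => (p x).2)
      (c := fun x => V1 x ^ 2 + ω ^ 2) (r := fun x => 2 * V1 x * V2 x * (φ x).1 - (g x).2)
      hT hθ hG (continuous_snd.comp_continuousOn hcont)
      (fun y hy => hasDerivAt_prodSnd (hs.hasDerivAt y (hsub hy)))
      (fun y hy => (hasDerivAt_prodSnd (hs.hasDerivAt_deriv y (hsub hy))).congr_deriv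
        (by simp; ring))
      (fun y _ => by have := h.pos y; positivity)
      (fun y hy => hr y hy _ _ (norm_fst_le (φ y)) (norm_snd_le (g y)))
      ((norm_snd_le _).trans hφT) (by rw [hφR, Prod.snd_zero]) hx

theorem norm_le_outer (h : SegregationProfile V1 V2)
    (hs : IsSolution (potential V1 V2 ω) R g φ p) (hT : 0 ≤ T) (hTR : T < R) (hθ : 0 < θ)
    (hG : 0 ≤ G) (hg : ∀ x ∈ Ioo (-R) R, ‖g x‖ ≤ G * Real.exp (-(θ * |x|)))
    (hφ : ∀ x ∈ Icc (-R) R, ‖φ x‖ ≤ 1) (hφT : ∀ x ∈ Icc (-T) T, ‖φ x‖ ≤ μ) (hφR : φ R = 0)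
    (hφR' : φ (-R) = 0) :
    ∀ x ∈ Icc (-R) R, ‖φ x‖ ≤ μ + 2 * V2 T / V1 T + G / θ ^ 2 := by
  intro x hx
  rcases le_total T x with hTx | hxT
  · exact h.norm_le_right hs hT hTR hθ hG hg hφ (hφT T ⟨by linarith, le_rfl⟩) hφR x ⟨hTx, hx.2⟩
  rcases le_total x (-T) with hxT' | hTx
  · have hleft := h.norm_le_right (h.reflect_solution hs) hT hTR hθ hG
      (fun y hy => by
        simpa [norm_swap] using hg (-y) ⟨by linarith [hy.2], by linarith [hy.1]⟩)
      (fun y hy => by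
        simpa [norm_swap] using hφ (-y) ⟨by linarith [hy.2], by linarith [hy.1]⟩)
      (by simpa [norm_swap] using hφT (-T) ⟨le_rfl, by linarith⟩) (by simp [hφR'])
      (-x) ⟨by linarith, by linarith [hx.1]⟩
    simpa [norm_swap] using hleft
  · have hV : 0 < 2 * V2 T / V1 T := div_pos (mul_pos two_pos (h.snd_pos T)) (h.pos T)
    have hGθ : 0 ≤ G / θ ^ 2 := by positivity
    linarith [hφT x ⟨hTx, hxT⟩]

end SegregationProfile

/-! ### The Wronskian with the translation mode -/

theorem abs_sub_le_sub_of_abs_deriv_le {f f' B B' : ℝ → ℝ} {a b : ℝ} (hab : a ≤ b)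
    (hf : ContinuousOn f (Icc a b)) (hB : ContinuousOn B (Icc a b))
    (hf' : ∀ x ∈ Ioo a b, HasDerivAt f (f' x) x) (hB' : ∀ x ∈ Ioo a b, HasDerivAt B (B' x) x)
    (hle : ∀ x ∈ Ioo a b, |f' x| ≤ B' x) : |f b - f a| ≤ B b - B a := by
  rw [← interior_Icc] at hf' hB' hle
  have hsub : MonotoneOn (fun x => B x - f x) (Icc a b) :=
    monotoneOn_of_hasDerivWithinAt_nonneg (convex_Icc a b) (hB.sub hf)
      (fun x hx => ((hB' x hx).sub (hf' x hx)).hasDerivWithinAt)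
      fun x hx => sub_nonneg.2 (le_of_abs_le (hle x hx))
  have hadd : MonotoneOn (fun x => B x + f x) (Icc a b) :=
    monotoneOn_of_hasDerivWithinAt_nonneg (convex_Icc a b) (hB.add hf)
      (fun x hx => ((hB' x hx).add (hf' x hx)).hasDerivWithinAt)
      fun x hx => by linarith [neg_le_of_abs_le (hle x hx)]
  have h1 := hsub (left_mem_Icc.2 hab) (right_mem_Icc.2 hab) hab
  have h2 := hadd (left_mem_Icc.2 hab) (right_mem_Icc.2 hab) hab
  simp only at h1 h2
  exact abs_le.2 ⟨by linarith, by linarith⟩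

section Weights

variable {ω R x : ℝ}

/-- The solution of `s'' = ω² s` with `s R = 0` and `s' 0 = -ω`. -/
noncomputable def sinhWeight (ω R x : ℝ) : ℝ := Real.sinh (ω * (R - x)) / Real.cosh (ω * R)

/-- The solution of `c'' = ω² c` with `c 0 = 1` and `c' R = 0`. -/
noncomputable def coshWeight (ω R x : ℝ) : ℝ := Real.cosh (ω * (R - x)) / Real.cosh (ω * R)

theorem hasDerivAt_sinhWeight (ω R x : ℝ) :
    HasDerivAt (sinhWeight ω R) (-(ω * coshWeight ω R x)) x :=
  ((((hasDerivAt_id x).const_sub R).const_mul ω).sinh.div_const _).congr_deriv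
    (by simp only [coshWeight, id]; ring)

theorem hasDerivAt_coshWeight (ω R x : ℝ) :
    HasDerivAt (coshWeight ω R) (-(ω * sinhWeight ω R x)) x :=
  ((((hasDerivAt_id x).const_sub R).const_mul ω).cosh.div_const _).congr_deriv
    (by simp only [sinhWeight, id]; ring)

@[simp]
theorem sinhWeight_self (ω R : ℝ) : sinhWeight ω R R = 0 := by simp [sinhWeight]

@[simp]
theorem coshWeight_zero (ω R : ℝ) : coshWeight ω R 0 = 1 := by
  simp [coshWeight, (Real.cosh_pos _).ne']

theorem coshWeight_nonneg (ω R x : ℝ) : 0 ≤ coshWeight ω R x := by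
  unfold coshWeight; positivity

theorem coshWeight_le_one (hω : 0 ≤ ω) (hx : 0 ≤ x) (hxR : x ≤ R) : coshWeight ω R x ≤ 1 := by
  refine div_le_one_of_le₀ (Real.cosh_le_cosh.2 ?_) (Real.cosh_pos _).le
  rw [abs_of_nonneg (by nlinarith), abs_of_nonneg (by nlinarith)]
  nlinarith

theorem abs_sinhWeight_le_one (hω : 0 ≤ ω) (hx : 0 ≤ x) (hxR : x ≤ R) :
    |sinhWeight ω R x| ≤ 1 := by
  refine le_trans ?_ (coshWeight_le_one hω hx hxR)
  rw [sinhWeight, coshWeight, abs_div, abs_of_pos (Real.cosh_pos (ω * R)), Real.abs_sinh]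
  gcongr
  exact (Real.sinh_lt_cosh _).le.trans_eq (Real.cosh_abs _)

theorem one_sub_coshWeight_le (hω : 0 ≤ ω) (hx : 0 ≤ x) : 1 - coshWeight ω R x ≤ ω * x := by
  have hexp : Real.exp (-(ω * x)) ≤ coshWeight ω R x := by
    rw [coshWeight, le_div_iff₀ (Real.cosh_pos _), mul_sub, Real.cosh_sub, ← Real.cosh_sub_sinh]
    nlinarith [Real.sinh_lt_cosh (ω * R), Real.sinh_nonneg_iff.2 (mul_nonneg hω hx)]
  linarith [Real.one_sub_le_exp_neg (ω * x)]

end Weights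

/-- The Wronskian of `φ` with the translation mode multiplied by `sinhWeight ω R`. The multiplier
solves `s'' = ω² s`, which cancels the `ω² φ` term of the equation, and kills the boundary term
at `R`. -/
noncomputable def wronskian (V1 V2 : ℝ → ℝ) (ω R : ℝ) (φ p : ℝ → ℝ × ℝ) (x : ℝ) : ℝ :=
  pairing (φ x) (sinhWeight ω R x • kernelDeriv V1 V2 x - (ω * coshWeight ω R x) • kernel V1 V2 x) -
    sinhWeight ω R x * pairing (p x) (kernel V1 V2 x)

theorem norm_half_smul_sub_le {E : Type*} [SeminormedAddCommGroup E] [NormedSpace ℝ E] {u v : E}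
    {r : ℝ} (hu : ‖u‖ ≤ r) (hv : ‖v‖ ≤ r) : ‖(1 / 2 : ℝ) • (u - v)‖ ≤ r := by
  rw [norm_smul, Real.norm_of_nonneg (by norm_num)]
  linarith [norm_sub_le u v]

theorem pairing_sub_smul (u v w : ℝ × ℝ) (c : ℝ) :
    pairing (u - c • v) w = pairing u w - c * pairing v w := by
  simp only [pairing, Prod.fst_sub, Prod.snd_sub, Prod.smul_fst, Prod.smul_snd, smul_eq_mul]
  ring

theorem pairing_comm (u v : ℝ × ℝ) : pairing u v = pairing v u := by
  simp only [pairing, mul_comm]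

theorem continuous_pairing : Continuous fun z : (ℝ × ℝ) × (ℝ × ℝ) => pairing z.1 z.2 := by
  unfold pairing; fun_prop

namespace SegregationProfile

variable {V1 V2 : ℝ → ℝ} {x T R ω θ G δ lam m κ : ℝ} {g φ p : ℝ → ℝ × ℝ}

theorem hasDerivAt_wronskian (h : SegregationProfile V1 V2)
    (hs : IsSolution (potential V1 V2 ω) R g φ p) (hx : x ∈ Ioo (-R) R) :
    HasDerivAt (wronskian V1 V2 ω R φ p)
      (-(2 * ω * coshWeight ω R x * pairing (φ x) (kernelDeriv V1 V2 x)) +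
        sinhWeight ω R x * pairing (g x) (kernel V1 V2 x)) x := by
  have hd := h.hasDerivAt_kernel x
  have hsw := hasDerivAt_sinhWeight ω R x
  refine ((hasDerivAt_pairing (hs.hasDerivAt x hx) ((hsw.smul (h.hasDerivAt_kernelDeriv x)).sub
    (((hasDerivAt_coshWeight ω R x).const_mul ω).smul hd))).sub
    (hsw.mul (hasDerivAt_pairing (hs.hasDerivAt_deriv x hx) hd))).congr_deriv ?_
  simp only [pairing, potential_apply, Pi.sub_apply, Pi.smul_apply', Prod.fst_sub, Prod.snd_sub,
    Prod.fst_add, Prod.snd_add, Prod.smul_fst, Prod.smul_snd, smul_eq_mul]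
  ring

theorem continuousOn_wronskian (h : SegregationProfile V1 V2)
    (hs : IsSolution (potential V1 V2 ω) R g φ p) :
    ContinuousOn (wronskian V1 V2 ω R φ p) (Icc (-R) R) := by
  have hd : Continuous (kernel V1 V2) :=
    continuous_iff_continuousAt.2 fun x => (h.hasDerivAt_kernel x).continuousAt
  have hd' : Continuous (kernelDeriv V1 V2) :=
    continuous_iff_continuousAt.2 fun x => (h.hasDerivAt_kernelDeriv x).continuousAt
  have hsw : Continuous (sinhWeight ω R) :=
    continuous_iff_continuousAt.2 fun x => (hasDerivAt_sinhWeight ω R x).continuousAt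
  have hcw : Continuous (coshWeight ω R) :=
    continuous_iff_continuousAt.2 fun x => (hasDerivAt_coshWeight ω R x).continuousAt
  exact (continuous_pairing.comp_continuousOn (hs.continuousOn.prodMk
    ((hsw.smul hd').sub ((hcw.const_mul ω).smul hd)).continuousOn)).sub
    (hsw.continuousOn.mul (continuous_pairing.comp_continuousOn
      (hs.continuousOn_deriv.prodMk hd.continuousOn)))

theorem wronskian_right (hφR : φ R = 0) : wronskian V1 V2 ω R φ p R = 0 := by
  simp [wronskian, pairing, hφR]

theorem wronskian_zero (h : SegregationProfile V1 V2) (hφ : φ 0 = -(φ 0).swap)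
    (hp : p 0 = (p 0).swap) :
    wronskian V1 V2 ω R φ p 0 = -(ω * pairing (φ 0) (kernel V1 V2 0)) := by
  have hV : V2 0 = V1 0 := by rw [← h.reflect, neg_zero]
  have hφ' : (φ 0).1 = -(φ 0).2 := congrArg Prod.fst hφ
  have hp' : (p 0).1 = (p 0).2 := congrArg Prod.fst hp
  simp only [wronskian, pairing, kernel, kernelDeriv, coshWeight_zero, h.deriv_snd, hV, hφ', hp',
    neg_zero, Prod.fst_sub, Prod.snd_sub, Prod.smul_mk, smul_eq_mul]
  ring

theorem abs_sinhWeight_mul_pairing_kernel_le (h : SegregationProfile V1 V2) (hω : 0 ≤ ω)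
    (hg : ∀ x ∈ Ioo (-R) R, ‖g x‖ ≤ G * Real.exp (-(θ * |x|))) (hx : 0 ≤ x) (hxR : x < R) :
    |sinhWeight ω R x * pairing (g x) (kernel V1 V2 x)| ≤
      2 * deriv V1 0 * G * Real.exp (-(θ * x)) := by
  have hgx := hg x ⟨by linarith, hxR⟩
  rw [abs_of_nonneg hx] at hgx
  have ha := h.deriv_pos 0
  calc |sinhWeight ω R x * pairing (g x) (kernel V1 V2 x)|
      ≤ 1 * (‖g x‖ * (|(kernel V1 V2 x).1| + |(kernel V1 V2 x).2|)) := by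
        rw [abs_mul]
        gcongr
        exacts [abs_sinhWeight_le_one hω hx hxR.le, abs_pairing_le _ _]
    _ ≤ 1 * (G * Real.exp (-(θ * x)) * (2 * deriv V1 0)) := by
        gcongr
        exacts [(norm_nonneg _).trans hgx, h.abs_kernel_add_abs_le x]
    _ = 2 * deriv V1 0 * G * Real.exp (-(θ * x)) := by ring

theorem abs_sub_le_of_abs_deriv_le (h : SegregationProfile V1 V2) {f f' : ℝ → ℝ} {t₀ t₁ : ℝ}
    (hθ : 0 < θ) (ht : t₀ ≤ t₁) (hf : ContinuousOn f (Icc t₀ t₁))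
    (hf' : ∀ x ∈ Ioo t₀ t₁, HasDerivAt f (f' x) x)
    (hle : ∀ x ∈ Ioo t₀ t₁,
      |f' x| ≤ m * (V1 x * V2 x ^ 2 + V2 x * V1 x ^ 2) + κ * Real.exp (-(θ * x))) :
    |f t₁ - f t₀| ≤ m * ((deriv V1 t₁ + deriv V2 t₁) - (deriv V1 t₀ + deriv V2 t₀)) +
      κ / θ * (Real.exp (-(θ * t₀)) - Real.exp (-(θ * t₁))) := by
  have hB : ∀ x, HasDerivAt
      (fun x => m * (deriv V1 x + deriv V2 x) + κ / θ * -Real.exp (-(θ * x)))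
      (m * (V1 x * V2 x ^ 2 + V2 x * V1 x ^ 2) + κ * Real.exp (-(θ * x))) x := fun x =>
    ((((h.hasDerivAt_deriv_fst x).add (h.hasDerivAt_deriv_snd x)).const_mul m).add
      ((hasDerivAt_exp_neg_mul θ x).neg.const_mul (κ / θ))).congr_deriv (by field_simp)
  have hmain := abs_sub_le_sub_of_abs_deriv_le ht hf
    (fun x _ => (hB x).continuousAt.continuousWithinAt) hf' (fun x _ => hB x) hle
  linarith

theorem abs_pairing_kernelDeriv_le (h : SegregationProfile V1 V2) {u : ℝ × ℝ} (hu : ‖u‖ ≤ δ) :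
    |pairing u (kernelDeriv V1 V2 x)| ≤ δ * (V1 x * V2 x ^ 2 + V2 x * V1 x ^ 2) := by
  rw [← h.abs_kernelDeriv_add_abs]
  exact (abs_pairing_le _ _).trans (mul_le_mul_of_nonneg_right hu (by positivity))

theorem abs_wronskian_le (h : SegregationProfile V1 V2)
    (hs : IsSolution (potential V1 V2 ω) R g φ p) (hω : 0 ≤ ω) (hT : 0 ≤ T) (hTR : T ≤ R)
    (hθ : 0 < θ) (hG : 0 ≤ G) (hg : ∀ x ∈ Ioo (-R) R, ‖g x‖ ≤ G * Real.exp (-(θ * |x|)))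
    (hφ : ∀ x ∈ Icc (-R) R, ‖φ x‖ ≤ 1) (hφR : φ R = 0) :
    |wronskian V1 V2 ω R φ p T| ≤
      4 * ω * deriv V1 (-T) + 2 * deriv V1 0 * G / θ * Real.exp (-(θ * T)) := by
  have hmem : ∀ x ∈ Ioo T R, x ∈ Ioo (-R) R := fun x hx => ⟨by linarith [hx.1], hx.2⟩
  have hderiv : ∀ x ∈ Ioo T R,
      |-(2 * ω * coshWeight ω R x * pairing (φ x) (kernelDeriv V1 V2 x)) +
        sinhWeight ω R x * pairing (g x) (kernel V1 V2 x)| ≤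
      2 * ω * (V1 x * V2 x ^ 2 + V2 x * V1 x ^ 2) +
        2 * deriv V1 0 * G * Real.exp (-(θ * x)) := fun x hx => by
    have hx0 := hT.trans hx.1.le
    refine (abs_add_le _ _).trans (add_le_add ?_
      (h.abs_sinhWeight_mul_pairing_kernel_le hω hg hx0 hx.2))
    calc |-(2 * ω * coshWeight ω R x * pairing (φ x) (kernelDeriv V1 V2 x))|
        = 2 * ω * coshWeight ω R x * |pairing (φ x) (kernelDeriv V1 V2 x)| := by
          rw [abs_neg, abs_mul, abs_of_nonneg
            (mul_nonneg (by positivity) (coshWeight_nonneg ω R x))]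
      _ ≤ 2 * ω * 1 * (1 * (V1 x * V2 x ^ 2 + V2 x * V1 x ^ 2)) := by
          gcongr
          exacts [coshWeight_le_one hω hx0 hx.2.le,
            h.abs_pairing_kernelDeriv_le (hφ x (Ioo_subset_Icc_self (hmem x hx)))]
      _ = 2 * ω * (V1 x * V2 x ^ 2 + V2 x * V1 x ^ 2) := by ring
  have hvar := h.abs_sub_le_of_abs_deriv_le hθ hTR
    ((h.continuousOn_wronskian hs).mono (Icc_subset_Icc_left (by linarith)))
    (fun x hx => h.hasDerivAt_wronskian hs (hmem x hx)) hderiv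
  rw [wronskian_right hφR, zero_sub, abs_neg] at hvar
  have hexp : 0 ≤ 2 * deriv V1 0 * G / θ * Real.exp (-(θ * R)) := by
    have := h.deriv_pos 0
    positivity
  have hflux := mul_le_mul_of_nonneg_left (h.deriv_add_deriv_sub_le hT hTR)
    (mul_nonneg zero_le_two hω)
  linarith

theorem hasDerivAt_wronskian_add (h : SegregationProfile V1 V2)
    (hs : IsSolution (potential V1 V2 ω) R g φ p) (lam : ℝ) (hx : x ∈ Ioo (-R) R) :
    HasDerivAt
      (fun x => wronskian V1 V2 ω R φ p x + ω * lam * pairing (kernel V1 V2 x) (kernel V1 V2 x))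
      (-(2 * ω * pairing (φ x - lam • kernel V1 V2 x) (kernelDeriv V1 V2 x)) +
        2 * ω * (1 - coshWeight ω R x) * pairing (φ x) (kernelDeriv V1 V2 x) +
        sinhWeight ω R x * pairing (g x) (kernel V1 V2 x)) x := by
  have hd := h.hasDerivAt_kernel x
  refine ((h.hasDerivAt_wronskian hs hx).add
    ((hasDerivAt_pairing hd hd).const_mul (ω * lam))).congr_deriv ?_
  rw [pairing_sub_smul, pairing_comm (kernelDeriv V1 V2 x)]
  ring

theorem abs_wronskian_add_sub_le (h : SegregationProfile V1 V2)
    (hs : IsSolution (potential V1 V2 ω) R g φ p) (hω : 0 ≤ ω) (hT : 0 ≤ T) (hTR : T < R)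
    (hθ : 0 < θ) (hg : ∀ x ∈ Ioo (-R) R, ‖g x‖ ≤ G * Real.exp (-(θ * |x|)))
    (hφ : ∀ x ∈ Icc (-R) R, ‖φ x‖ ≤ 1)
    (hlam : ∀ x ∈ Icc (-T) T, ‖φ x - lam • kernel V1 V2 x‖ ≤ δ) :
    |(wronskian V1 V2 ω R φ p T + ω * lam * pairing (kernel V1 V2 T) (kernel V1 V2 T)) -
        (wronskian V1 V2 ω R φ p 0 + ω * lam * pairing (kernel V1 V2 0) (kernel V1 V2 0))| ≤
      4 * ω * (δ + ω * T) * deriv V1 0 +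
        2 * deriv V1 0 * G / θ * (1 - Real.exp (-(θ * T))) := by
  have hmem : ∀ x ∈ Icc 0 T, x ∈ Ioo (-R) R := fun x hx => ⟨by linarith [hx.1], by linarith [hx.2]⟩
  have hδ : 0 ≤ δ := (norm_nonneg _).trans (hlam T ⟨by linarith, le_rfl⟩)
  have hderiv : ∀ x ∈ Ioo 0 T,
      |-(2 * ω * pairing (φ x - lam • kernel V1 V2 x) (kernelDeriv V1 V2 x)) +
        2 * ω * (1 - coshWeight ω R x) * pairing (φ x) (kernelDeriv V1 V2 x) +
        sinhWeight ω R x * pairing (g x) (kernel V1 V2 x)| ≤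
      2 * ω * (δ + ω * T) * (V1 x * V2 x ^ 2 + V2 x * V1 x ^ 2) +
        2 * deriv V1 0 * G * Real.exp (-(θ * x)) := fun x hx => by
    have hxR := hmem x (Ioo_subset_Icc_self hx)
    refine (abs_add_le _ _).trans (add_le_add ((abs_add_le _ _).trans ?_)
      (h.abs_sinhWeight_mul_pairing_kernel_le hω hg hx.1.le hxR.2))
    have hc0 := sub_nonneg.2 (coshWeight_le_one hω hx.1.le hxR.2.le)
    have hc1 : 1 - coshWeight ω R x ≤ ω * T :=
      (one_sub_coshWeight_le hω hx.1.le).trans (by gcongr; exact hx.2.le)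
    rw [abs_neg, abs_mul (2 * ω), abs_mul (2 * ω * (1 - _)),
      abs_of_nonneg (mul_nonneg zero_le_two hω),
      abs_of_nonneg (mul_nonneg (mul_nonneg zero_le_two hω) hc0)]
    calc _ ≤ 2 * ω * (δ * (V1 x * V2 x ^ 2 + V2 x * V1 x ^ 2)) +
          2 * ω * (ω * T) * (1 * (V1 x * V2 x ^ 2 + V2 x * V1 x ^ 2)) := by
          gcongr
          exacts [h.abs_pairing_kernelDeriv_le (hlam x ⟨by linarith [hx.1], hx.2.le⟩),
            h.abs_pairing_kernelDeriv_le (hφ x (Ioo_subset_Icc_self hxR))]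
      _ = _ := by ring
  have hvar := h.abs_sub_le_of_abs_deriv_le hθ hT (fun x hx =>
      ((h.hasDerivAt_wronskian_add hs lam (hmem x hx)).continuousAt).continuousWithinAt)
    (fun x hx => h.hasDerivAt_wronskian_add hs lam (hmem x (Ioo_subset_Icc_self hx))) hderiv
  have hflux := mul_le_mul_of_nonneg_left (h.deriv_add_deriv_sub_le le_rfl hT)
    (show 0 ≤ 2 * ω * (δ + ω * T) by positivity)
  simp only [mul_zero, neg_zero, Real.exp_zero] at hvar hflux
  linarith

theorem sq_le_pairing_kernel (h : SegregationProfile V1 V2) (hT : 0 ≤ T) :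
    deriv V1 0 ^ 2 ≤ pairing (kernel V1 V2 T) (kernel V1 V2 T) := by
  have hmono : deriv V1 0 ^ 2 ≤ deriv V1 T ^ 2 :=
    pow_le_pow_left₀ (h.deriv_pos 0).le (h.strictMono_deriv.monotone hT) 2
  simp only [pairing, kernel]
  nlinarith [sq_nonneg (deriv V2 T)]

theorem abs_mul_sq_le_of_antisymmetric (h : SegregationProfile V1 V2)
    (hs : IsSolution (potential V1 V2 ω) R g φ p) (hω : 0 < ω) (hT : 0 ≤ T) (hTR : T < R)
    (hθ : 0 < θ) (hG : 0 ≤ G) (hg : ∀ x ∈ Ioo (-R) R, ‖g x‖ ≤ G * Real.exp (-(θ * |x|)))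
    (hφ : ∀ x ∈ Icc (-R) R, ‖φ x‖ ≤ 1) (hφR : φ R = 0) (hφ0 : φ 0 = -(φ 0).swap)
    (hp0 : p 0 = (p 0).swap) (hlam : ∀ x ∈ Icc (-T) T, ‖φ x - lam • kernel V1 V2 x‖ ≤ δ) :
    |lam| * deriv V1 0 ^ 2 ≤ 4 * deriv V1 (-T) + 6 * deriv V1 0 * δ + 4 * deriv V1 0 * ω * T +
      2 * deriv V1 0 * G / (θ * ω) := by
  have hcore := h.abs_wronskian_add_sub_le hs hω.le hT hTR hθ hg hφ hlam
  have htail := h.abs_wronskian_le hs hω.le hT hTR.le hθ hG hg hφ hφR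
  have hcenter : |pairing (φ 0 - lam • kernel V1 V2 0) (kernel V1 V2 0)| ≤
      δ * (2 * deriv V1 0) :=
    (abs_pairing_le _ _).trans (mul_le_mul (hlam 0 ⟨by linarith, hT⟩)
      (h.abs_kernel_add_abs_le 0) (by positivity)
      ((norm_nonneg _).trans (hlam 0 ⟨by linarith, hT⟩)))
  rw [pairing_sub_smul] at hcenter
  rw [h.wronskian_zero hφ0 hp0] at hcore
  have hle : ω * (|lam| * deriv V1 0 ^ 2) ≤ ω * (4 * deriv V1 (-T) + 6 * deriv V1 0 * δ +
      4 * deriv V1 0 * ω * T + 2 * deriv V1 0 * G / (θ * ω)) :=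
    calc ω * (|lam| * deriv V1 0 ^ 2)
        ≤ ω * (|lam| * pairing (kernel V1 V2 T) (kernel V1 V2 T)) := by
          gcongr
          exact h.sq_le_pairing_kernel hT
      _ = |ω * (lam * pairing (kernel V1 V2 T) (kernel V1 V2 T))| := by
          rw [abs_mul, abs_mul, abs_of_pos hω,
            abs_of_nonneg ((sq_nonneg _).trans (h.sq_le_pairing_kernel hT))]
      _ ≤ 4 * ω * (δ + ω * T) * deriv V1 0 + 2 * deriv V1 0 * G / θ +
          4 * ω * deriv V1 (-T) + ω * (δ * (2 * deriv V1 0)) := by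
          have hcenter' := mul_le_mul_of_nonneg_left hcenter hω.le
          rw [← abs_of_pos hω, ← abs_mul, abs_of_pos hω] at hcenter'
          rw [abs_le] at *
          constructor <;> linarith [hcore.1, hcore.2, htail.1, htail.2, hcenter'.1, hcenter'.2]
      _ = _ := by field_simp; ring
  exact le_of_mul_le_mul_left hle hω

theorem norm_smul_kernel_le (h : SegregationProfile V1 V2)
    (hs : IsSolution (potential V1 V2 ω) R g φ p) (hω : 0 < ω) (hT : 0 < T) (hTR : T < R)
    (hθ : 0 < θ) (hG : 0 ≤ G) (hg : ∀ x ∈ Ioo (-R) R, ‖g x‖ ≤ G * Real.exp (-(θ * |x|)))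
    (hφ : ∀ x ∈ Icc (-R) R, ‖φ x‖ ≤ 1) (hφR : φ R = 0) (hφR' : φ (-R) = 0)
    (hlam : ∀ x ∈ Icc (-T) T, ‖φ x - lam • kernel V1 V2 x‖ ≤ δ) (x : ℝ) :
    ‖lam • kernel V1 V2 x‖ ≤
      8 * V1 0 / (deriv V1 0 * T) + 12 * δ + 8 * ω * T + 4 * G / (θ * ω) := by
  have hodd : ∀ (u : ℝ → ℝ × ℝ) {x r}, ‖u x‖ ≤ r → ‖u (-x)‖ ≤ r →
      ‖(1 / 2 : ℝ) • (u x - (u (-x)).swap)‖ ≤ r := fun u x r hx hx' =>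
    norm_half_smul_sub_le hx ((norm_swap _).trans_le hx')
  have hcoeff := h.abs_mul_sq_le_of_antisymmetric (h.antisymmetrize_solution hs) hω hT.le hTR hθ hG
    (lam := lam) (δ := δ)
    (fun y hy => hodd g (hg y hy)
      (abs_neg y ▸ hg (-y) ⟨by linarith [hy.2], by linarith [hy.1]⟩))
    (fun y hy => hodd φ (hφ y hy) (hφ (-y) ⟨by linarith [hy.2], by linarith [hy.1]⟩))
    (by simp [hφR, hφR']) (by ext <;> simp [← mul_neg]) (by ext <;> simp [add_comm]) fun y hy => by
      convert hodd (fun y => φ y - lam • kernel V1 V2 y) (hlam y hy)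
        (hlam (-y) ⟨by linarith [hy.2], by linarith [hy.1]⟩) using 2
      have hswap : (φ (-y) - lam • kernel V1 V2 (-y)).swap =
          (φ (-y)).swap + lam • kernel V1 V2 y := by
        rw [← neg_neg (kernel V1 V2 y), ← h.swap_kernel_neg, smul_neg, ← sub_eq_add_neg]
        rfl
      rw [hswap]
      module
  have ha := h.deriv_pos 0
  have hdecay : deriv V1 (-T) ≤ V1 0 / T := (le_div_iff₀ hT).2 (h.deriv_neg_mul_le hT.le)
  calc ‖lam • kernel V1 V2 x‖ ≤ |lam| * (2 * deriv V1 0) := by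
        rw [norm_smul, Real.norm_eq_abs]
        gcongr
        exact h.norm_kernel_le x
    _ = 2 / deriv V1 0 * (|lam| * deriv V1 0 ^ 2) := by field_simp
    _ ≤ 2 / deriv V1 0 * (4 * (V1 0 / T) + 6 * deriv V1 0 * δ + 4 * deriv V1 0 * ω * T +
          2 * deriv V1 0 * G / (θ * ω)) := by
        gcongr
        linarith
    _ = _ := by field_simp; ring

end SegregationProfile

/-! ### The a priori estimate -/

/-- Nondegeneracy of the profile: every bounded solution on `ℝ` of `L_0 ψ = 0` is a multiple of the
translation mode. -/
def IsNondegenerate (V1 V2 : ℝ → ℝ) : Prop :=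
  ∀ ψ q : ℝ → ℝ × ℝ, (∀ x, HasDerivAt ψ (q x) x) →
    (∀ x, HasDerivAt q (potential V1 V2 0 x (ψ x)) x) → (∃ C, ∀ x, ‖ψ x‖ ≤ C) →
    ∃ lam : ℝ, ∀ x, ψ x = lam • kernel V1 V2 x

namespace SegregationProfile

variable {V1 V2 : ℝ → ℝ} {T R ω θ G δ lam : ℝ} {g φ p : ℝ → ℝ × ℝ}

theorem exists_norm_sub_smul_kernel_le (h : SegregationProfile V1 V2)
    (hnd : IsNondegenerate V1 V2) (T : ℝ) (hδ : 0 < δ) :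
    ∃ N : ℝ, 0 < N ∧ ∀ (R ω : ℝ) (g φ p : ℝ → ℝ × ℝ), N < R → ω ^ 2 ≤ N⁻¹ →
      IsSolution (potential V1 V2 ω) R g φ p → (∀ x ∈ Ioo (-R) R, ‖g x‖ ≤ N⁻¹) →
      (∀ x ∈ Icc (-R) R, ‖φ x‖ ≤ 1) →
      ∃ lam : ℝ, ∀ x ∈ Icc (-T) T, ‖φ x - lam • kernel V1 V2 x‖ ≤ δ := by
  obtain ⟨N, hN, hnear⟩ := exists_global_solution_near (h.continuous_potential 0) T hδ
  refine ⟨2 * N, by positivity, fun R ω g φ p hR hω hs hg hφ => ?_⟩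
  have hsource : ∀ x ∈ Ioo (-R) R, ‖g x - ω ^ 2 • φ x‖ ≤ N⁻¹ := fun x hx =>
    calc ‖g x - ω ^ 2 • φ x‖ ≤ ‖g x‖ + ω ^ 2 * ‖φ x‖ := by
          refine (norm_sub_le _ _).trans_eq ?_
          rw [norm_smul, Real.norm_of_nonneg (sq_nonneg ω)]
      _ ≤ (2 * N)⁻¹ + (2 * N)⁻¹ * 1 := by
          gcongr
          exacts [hg x hx, hφ x (Ioo_subset_Icc_self hx)]
      _ = N⁻¹ := by field_simp; norm_num
  obtain ⟨ψ, q, hψ, hq, hψ1, hφψ⟩ :=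
    hnear R _ φ p (by linarith) hs.to_zero_frequency hsource hφ
  obtain ⟨lam, hlam⟩ := hnd ψ q hψ hq ⟨1, hψ1⟩
  exact ⟨lam, fun x hx => hlam x ▸ hφψ x hx⟩

theorem norm_le_of_norm_sub_smul_kernel_le (h : SegregationProfile V1 V2)
    (hs : IsSolution (potential V1 V2 ω) R g φ p) (hω : 0 < ω) (hT : 0 < T) (hTR : T < R)
    (hθ : 0 < θ) (hG : 0 ≤ G) (hg : ∀ x ∈ Ioo (-R) R, ‖g x‖ ≤ G * Real.exp (-(θ * |x|)))
    (hφ : ∀ x ∈ Icc (-R) R, ‖φ x‖ ≤ 1) (hφR : φ R = 0) (hφR' : φ (-R) = 0)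
    (hlam : ∀ x ∈ Icc (-T) T, ‖φ x - lam • kernel V1 V2 x‖ ≤ δ) :
    ∀ x ∈ Icc (-R) R, ‖φ x‖ ≤
      10 * V1 0 / (deriv V1 0 * T) + 13 * δ + 8 * ω * T + 4 * G / (θ * ω) + G / θ ^ 2 := by
  have hcore : ∀ x ∈ Icc (-T) T, ‖φ x‖ ≤
      δ + (8 * V1 0 / (deriv V1 0 * T) + 12 * δ + 8 * ω * T + 4 * G / (θ * ω)) := fun x hx =>
    (norm_le_norm_sub_add _ _).trans (add_le_add (hlam x hx)
      (h.norm_smul_kernel_le hs hω hT hTR hθ hG hg hφ hφR hφR' hlam x))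
  have hV2 : V2 T ≤ V1 0 := by
    rw [← h.reflect]
    exact h.strictMono_fst.monotone (by linarith)
  have hratio : 2 * V2 T / V1 T ≤ 2 * V1 0 / (deriv V1 0 * T) :=
    div_le_div₀ (mul_pos two_pos (h.pos 0)).le (by linarith) (mul_pos (h.deriv_pos 0) hT)
      (h.deriv_zero_mul_le hT.le)
  have hsum : 8 * V1 0 / (deriv V1 0 * T) + 2 * V1 0 / (deriv V1 0 * T) =
      10 * V1 0 / (deriv V1 0 * T) := by ring
  intro x hx
  linarith [h.norm_le_outer hs hT.le hTR hθ hG hg hφ hcore hφR hφR' x hx]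

theorem exists_norm_le_half_add (h : SegregationProfile V1 V2) (hnd : IsNondegenerate V1 V2)
    (hθ : 0 < θ) :
    ∃ N : ℝ, 1 ≤ N ∧ ∀ (R ω G : ℝ) (g φ p : ℝ → ℝ × ℝ), N < R → ω ∈ Ioo 0 N⁻¹ → 0 ≤ G →
      G ≤ N⁻¹ → IsSolution (potential V1 V2 ω) R g φ p →
      (∀ x ∈ Ioo (-R) R, ‖g x‖ ≤ G * Real.exp (-(θ * |x|))) → φ R = 0 → φ (-R) = 0 →
      (∀ x ∈ Icc (-R) R, ‖φ x‖ ≤ 1) →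
      ∀ x ∈ Icc (-R) R, ‖φ x‖ ≤ 1 / 2 + (4 / θ + 1 / θ ^ 2) * (ω⁻¹ * G) := by
  have ha := h.deriv_pos 0
  have hV := h.pos 0
  set T := 80 * V1 0 / deriv V1 0 with hTdef
  have hT : 0 < T := by positivity
  obtain ⟨N, hN, hnear⟩ := h.exists_norm_sub_smul_kernel_le hnd T (δ := 1 / 104) (by norm_num)
  have hinv : (N + 64 * T + 1)⁻¹ ≤ N⁻¹ := inv_anti₀ hN (by linarith)
  refine ⟨N + 64 * T + 1, by linarith,
    fun R ω G g φ p hR ⟨hω, hωN⟩ hG hGN hs hg hφR hφR' hφ x hx => ?_⟩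
  have hωN' : (N + 64 * T + 1) * ω < 1 := by
    rwa [← one_div, lt_div_iff₀' (by positivity)] at hωN
  have hωT : 64 * T * ω < 1 := by nlinarith
  have hω1 : ω < 1 := by nlinarith [mul_pos hT hω]
  obtain ⟨lam, hlam⟩ := hnear R ω g φ p (by linarith) (by nlinarith) hs
    (fun x hx => (hg x hx).trans ((mul_le_of_le_one_right hG
      (Real.exp_le_one_iff.2 (neg_nonpos.2 (by positivity)))).trans (hGN.trans hinv))) hφ
  have hbound := h.norm_le_of_norm_sub_smul_kernel_le hs hω hT (by linarith) hθ hG hg hφ hφR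
    hφR' hlam x hx
  have hprofile : 10 * V1 0 / (deriv V1 0 * T) = 1 / 8 := by
    rw [hTdef]; field_simp; norm_num
  have hsource : 4 * G / (θ * ω) + G / θ ^ 2 ≤ (4 / θ + 1 / θ ^ 2) * (ω⁻¹ * G) :=
    calc 4 * G / (θ * ω) + G / θ ^ 2 = 4 / θ * (ω⁻¹ * G) + 1 / θ ^ 2 * G := by field_simp
      _ ≤ 4 / θ * (ω⁻¹ * G) + 1 / θ ^ 2 * (ω⁻¹ * G) := by
        gcongr
        exact le_mul_of_one_le_left hG ((one_le_inv₀ hω).2 hω1.le)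
      _ = _ := by ring
  linarith

theorem exists_one_le_of_norm_eq_one (h : SegregationProfile V1 V2)
    (hnd : IsNondegenerate V1 V2) (hθ : 0 < θ) :
    ∃ C R₀ ω₀ : ℝ, 0 < C ∧ 0 < R₀ ∧ 0 < ω₀ ∧ ∀ (R ω G : ℝ) (g φ p : ℝ → ℝ × ℝ), R₀ < R →
      ω ∈ Ioo 0 ω₀ → 0 ≤ G → IsSolution (potential V1 V2 ω) R g φ p →
      (∀ x ∈ Ioo (-R) R, ‖g x‖ ≤ G * Real.exp (-(θ * |x|))) → φ R = 0 → φ (-R) = 0 →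
      (∀ x ∈ Icc (-R) R, ‖φ x‖ ≤ 1) → (∃ x ∈ Icc (-R) R, ‖φ x‖ = 1) → 1 ≤ C * ω⁻¹ * G := by
  obtain ⟨N, hN, hhalf⟩ := h.exists_norm_le_half_add hnd hθ
  have hN0 : 0 < N := by linarith
  refine ⟨N + 2 * (4 / θ + 1 / θ ^ 2), N, N⁻¹, by positivity, hN0, inv_pos.2 hN0,
    fun R ω G g φ p hR hω hG hs hg hφR hφR' hφ ⟨x, hx, hx1⟩ => ?_⟩
  have hω0 := hω.1
  rw [mul_assoc, add_mul]
  rcases le_or_gt G N⁻¹ with hGN | hGN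
  · have hbound := hhalf R ω G g φ p hR hω hG hGN hs hg hφR hφR' hφ x hx
    have hN' : 0 ≤ N * (ω⁻¹ * G) := by positivity
    linarith
  · have hω1 : 1 ≤ ω⁻¹ := (one_le_inv₀ hω0).2 (hω.2.le.trans (inv_le_one_of_one_le₀ hN))
    calc 1 = N * N⁻¹ := (mul_inv_cancel₀ hN0.ne').symm
      _ ≤ N * (ω⁻¹ * G) := by gcongr; exact hGN.le.trans (le_mul_of_one_le_left hG hω1)
      _ ≤ _ := le_add_of_nonneg_right (by positivity)

theorem exists_norm_le (h : SegregationProfile V1 V2) (hnd : IsNondegenerate V1 V2)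
    (hθ : 0 < θ) :
    ∃ C R₀ ω₀ : ℝ, 0 < C ∧ 0 < R₀ ∧ 0 < ω₀ ∧ ∀ (R ω G : ℝ) (g φ p : ℝ → ℝ × ℝ), R₀ < R →
      ω ∈ Ioo 0 ω₀ → 0 ≤ G → IsSolution (potential V1 V2 ω) R g φ p →
      (∀ x ∈ Ioo (-R) R, ‖g x‖ ≤ G * Real.exp (-(θ * |x|))) → φ R = 0 → φ (-R) = 0 →
      ∀ x ∈ Icc (-R) R, ‖φ x‖ ≤ C * ω⁻¹ * G := by
  obtain ⟨C, R₀, ω₀, hC, hR₀, hω₀, hone⟩ := h.exists_one_le_of_norm_eq_one hnd hθ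
  refine ⟨C, R₀, ω₀, hC, hR₀, hω₀, fun R ω G g φ p hR hω hG hs hg hφR hφR' x hx => ?_⟩
  obtain ⟨y, hy, hmax⟩ := isCompact_Icc.exists_isMaxOn ⟨x, hx⟩ hs.continuousOn.norm
  suffices hle : ‖φ y‖ ≤ C * ω⁻¹ * G from (hmax hx).trans hle
  have hω' := hω.1
  rcases eq_or_ne ‖φ y‖ 0 with h0 | h0
  · rw [h0]; positivity
  have hM : 0 ≤ ‖φ y‖⁻¹ := by positivity
  have hscaled := hone R ω (‖φ y‖⁻¹ * G) _ _ _ hR hω (by positivity) (hs.smul ‖φ y‖⁻¹)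
    (fun z hz => by
      rw [norm_smul, Real.norm_of_nonneg hM, mul_assoc]
      exact mul_le_mul_of_nonneg_left (hg z hz) hM)
    (by rw [hφR, smul_zero]) (by rw [hφR', smul_zero])
    (fun z hz => by
      rw [norm_smul, Real.norm_of_nonneg hM, ← inv_mul_cancel₀ h0]
      exact mul_le_mul_of_nonneg_left (hmax hz) hM)
    ⟨y, hy, by rw [norm_smul, Real.norm_of_nonneg hM, inv_mul_cancel₀ h0]⟩
  rwa [mul_left_comm, ← div_eq_inv_mul, one_le_div (by positivity)] at hscaled

end SegregationProfile

theorem hasDerivAt_derivWithin_Icc {f : ℝ → ℝ} {a b x : ℝ} (hf : ContDiffOn ℝ 2 f (Icc a b))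
    (hx : x ∈ Ioo a b) :
    HasDerivAt f (derivWithin f (Icc a b) x) x ∧
      HasDerivAt (derivWithin f (Icc a b)) (deriv (deriv f) x) x := by
  have hderivWithin : ∀ y ∈ Ioo a b, derivWithin f (Icc a b) y = deriv f y := fun y hy =>
    derivWithin_of_mem_nhds (Icc_mem_nhds hy.1 hy.2)
  have hnhds : Ioo a b ∈ 𝓝 x := Ioo_mem_nhds hx.1 hx.2
  have hf' : ContDiffAt ℝ 2 f x := hf.contDiffAt (Icc_mem_nhds hx.1 hx.2)
  refine ⟨hderivWithin x hx ▸ (hf'.differentiableAt two_ne_zero).hasDerivAt, ?_⟩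
  have hderiv : DifferentiableAt ℝ (deriv f) x :=
    (((hf.mono Ioo_subset_Icc_self).deriv_of_isOpen isOpen_Ioo (by norm_num)).differentiableOn
      one_ne_zero x hx).differentiableAt hnhds
  exact hderiv.hasDerivAt.congr_of_eventuallyEq (eventually_of_mem hnhds hderivWithin)

theorem isSolution_of_contDiffOn {V1 V2 φ1 φ2 g1 g2 : ℝ → ℝ} {R ω : ℝ} (hR : 0 < R)
    (hφ1 : ContDiffOn ℝ 2 φ1 (Icc (-R) R)) (hφ2 : ContDiffOn ℝ 2 φ2 (Icc (-R) R))
    (heq : ∀ x ∈ Ioo (-R) R,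
      -deriv (deriv φ1) x + ((V2 x) ^ 2 + ω ^ 2) * φ1 x + 2 * V1 x * V2 x * φ2 x = g1 x ∧
      -deriv (deriv φ2) x + ((V1 x) ^ 2 + ω ^ 2) * φ2 x + 2 * V1 x * V2 x * φ1 x = g2 x) :
    IsSolution (potential V1 V2 ω) R (fun x => (g1 x, g2 x)) (fun x => (φ1 x, φ2 x))
      (fun x => (derivWithin φ1 (Icc (-R) R) x, derivWithin φ2 (Icc (-R) R) x)) where
  continuousOn := hφ1.continuousOn.prodMk hφ2.continuousOn
  continuousOn_deriv :=
    (hφ1.continuousOn_derivWithin (uniqueDiffOn_Icc (by linarith)) (by norm_num)).prodMk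
      (hφ2.continuousOn_derivWithin (uniqueDiffOn_Icc (by linarith)) (by norm_num))
  hasDerivAt x hx :=
    (hasDerivAt_derivWithin_Icc hφ1 hx).1.prodMk (hasDerivAt_derivWithin_Icc hφ2 hx).1
  hasDerivAt_deriv x hx := by
    refine ((hasDerivAt_derivWithin_Icc hφ1 hx).2.prodMk
      (hasDerivAt_derivWithin_Icc hφ2 hx).2).congr_deriv ?_
    ext
    · simp only [potential_apply, Prod.fst_sub]; linarith [(heq x hx).1]
    · simp only [potential_apply, Prod.snd_sub]; linarith [(heq x hx).2]

theorem contDiff_two_of_hasDerivAt {f f' f'' : ℝ → ℝ} (hf : ∀ x, HasDerivAt f (f' x) x)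
    (hf' : ∀ x, HasDerivAt f' (f'' x) x) (hf'' : Continuous f'') : ContDiff ℝ 2 f := by
  have hderiv : deriv f = f' := funext fun x => (hf x).deriv
  have hderiv' : deriv f' = f'' := funext fun x => (hf' x).deriv
  refine (contDiff_succ_iff_deriv (n := 1)).2 ⟨fun x => (hf x).differentiableAt, by simp, ?_⟩
  rw [hderiv]
  exact contDiff_one_iff_deriv.2 ⟨fun x => (hf' x).differentiableAt, hderiv' ▸ hf''⟩

theorem isNondegenerate_of_contDiff {V1 V2 : ℝ → ℝ} (hV1 : Continuous V1) (hV2 : Continuous V2)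
    (hnondeg : ∀ ψ1 ψ2 : ℝ → ℝ, ContDiff ℝ 2 ψ1 → ContDiff ℝ 2 ψ2 →
      (∃ Cb : ℝ, ∀ x : ℝ, |ψ1 x| ≤ Cb ∧ |ψ2 x| ≤ Cb) →
      (∀ x : ℝ, -deriv (deriv ψ1) x + (V2 x) ^ 2 * ψ1 x + 2 * V1 x * V2 x * ψ2 x = 0) →
      (∀ x : ℝ, -deriv (deriv ψ2) x + (V1 x) ^ 2 * ψ2 x + 2 * V1 x * V2 x * ψ1 x = 0) →
      ∃ lam : ℝ, (∀ x : ℝ, ψ1 x = lam * deriv V1 x) ∧ (∀ x : ℝ, ψ2 x = lam * deriv V2 x)) :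
    IsNondegenerate V1 V2 := by
  rintro ψ q hψ hq ⟨C, hC⟩
  have hψcont : Continuous ψ := continuous_iff_continuousAt.2 fun x => (hψ x).continuousAt
  have hψ1 := fun x => hasDerivAt_prodFst (hψ x)
  have hψ2 := fun x => hasDerivAt_prodSnd (hψ x)
  have hq1 := fun x => hasDerivAt_prodFst (hq x)
  have hq2 := fun x => hasDerivAt_prodSnd (hq x)
  simp only [potential_apply, ne_eq, OfNat.ofNat_ne_zero, not_false_eq_true, zero_pow,
    add_zero] at hq1 hq2
  obtain ⟨lam, hlam1, hlam2⟩ := hnondeg (fun x => (ψ x).1) (fun x => (ψ x).2)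
    (contDiff_two_of_hasDerivAt hψ1 hq1 (by fun_prop))
    (contDiff_two_of_hasDerivAt hψ2 hq2 (by fun_prop))
    ⟨C, fun x => ⟨(norm_fst_le _).trans (hC x), (norm_snd_le _).trans (hC x)⟩⟩
    (fun x => by rw [funext fun x => (hψ1 x).deriv, (hq1 x).deriv]; ring)
    (fun x => by rw [funext fun x => (hψ2 x).deriv, (hq2 x).deriv]; ring)
  exact ⟨lam, fun x => Prod.ext (hlam1 x) (hlam2 x)⟩

theorem exp_mul_abs_le_two_mul_cosh {θ : ℝ} (hθ : 0 ≤ θ) (x : ℝ) :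
    Real.exp (θ * |x|) ≤ 2 * Real.cosh (θ * x) := by
  rw [← Real.cosh_abs, abs_mul, abs_of_nonneg hθ, Real.cosh_eq]
  linarith [Real.exp_pos (-(θ * |x|))]

theorem main_invertibility_estimate_general {V1 V2 : ℝ → ℝ}
    (hV1 : ContDiff ℝ 2 V1) (hV1pos : ∀ x : ℝ, 0 < V1 x)
    (hode1 : ∀ x : ℝ, -deriv (deriv V1) x + V1 x * (V2 x) ^ 2 = 0)
    (hsym : ∀ x : ℝ, V1 (-x) = V2 x) (hmono : ∀ x : ℝ, 0 < deriv V1 x)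
    (hnondeg : ∀ ψ1 ψ2 : ℝ → ℝ, ContDiff ℝ 2 ψ1 → ContDiff ℝ 2 ψ2 →
      (∃ Cb : ℝ, ∀ x : ℝ, |ψ1 x| ≤ Cb ∧ |ψ2 x| ≤ Cb) →
      (∀ x : ℝ, -deriv (deriv ψ1) x + (V2 x) ^ 2 * ψ1 x + 2 * V1 x * V2 x * ψ2 x = 0) →
      (∀ x : ℝ, -deriv (deriv ψ2) x + (V1 x) ^ 2 * ψ2 x + 2 * V1 x * V2 x * ψ1 x = 0) →
      ∃ lam : ℝ, (∀ x : ℝ, ψ1 x = lam * deriv V1 x) ∧ (∀ x : ℝ, ψ2 x = lam * deriv V2 x))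
    {θ : ℝ} (hθ : 0 < θ) :
    ∃ C R₀ ω₀ : ℝ, 0 < C ∧ 0 < R₀ ∧ 0 < ω₀ ∧
      ∀ R ω : ℝ, R₀ < R → ω ∈ Ioo 0 ω₀ → ∀ φ1 φ2 g1 g2 : ℝ → ℝ,
        ContDiffOn ℝ 2 φ1 (Icc (-R) R) → ContDiffOn ℝ 2 φ2 (Icc (-R) R) →
        φ1 (-R) = 0 → φ1 R = 0 → φ2 (-R) = 0 → φ2 R = 0 →
        (∀ x ∈ Ioo (-R) R,
          -deriv (deriv φ1) x + ((V2 x) ^ 2 + ω ^ 2) * φ1 x + 2 * V1 x * V2 x * φ2 x = g1 x ∧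
          -deriv (deriv φ2) x + ((V1 x) ^ 2 + ω ^ 2) * φ2 x + 2 * V1 x * V2 x * φ1 x = g2 x) →
        ∀ G : ℝ, (∀ x ∈ Ioo (-R) R, max |g1 x| |g2 x| * Real.cosh (θ * x) ≤ G) →
        ∀ x ∈ Icc (-R) R, max |φ1 x| |φ2 x| ≤ C * ω⁻¹ * G := by
  have h : SegregationProfile V1 V2 :=
    ⟨hV1, hV1pos, hmono, hsym, fun x => by linarith [hode1 x]⟩
  have hnd := isNondegenerate_of_contDiff h.continuous_fst h.continuous_snd hnondeg
  obtain ⟨C, R₀, ω₀, hC, hR₀, hω₀, hest⟩ := h.exists_norm_le hnd hθ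
  refine ⟨C * 2, R₀, ω₀, by positivity, hR₀, hω₀,
    fun R ω hR hω φ1 φ2 g1 g2 hφ1 hφ2 hb1' hb1 hb2' hb2 heq G hG x hx => ?_⟩
  have hR' := hR₀.trans hR
  have hG0 : 0 ≤ G := le_trans (by positivity) (hG 0 ⟨by linarith, hR'⟩)
  have hg : ∀ y ∈ Ioo (-R) R, ‖(g1 y, g2 y)‖ ≤ 2 * G * Real.exp (-(θ * |y|)) := fun y hy => by
    rw [Real.exp_neg, ← div_eq_mul_inv, le_div_iff₀ (Real.exp_pos _)]
    calc ‖(g1 y, g2 y)‖ * Real.exp (θ * |y|) ≤ ‖(g1 y, g2 y)‖ * (2 * Real.cosh (θ * y)) := by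
          gcongr
          exact exp_mul_abs_le_two_mul_cosh hθ.le y
      _ = 2 * (‖(g1 y, g2 y)‖ * Real.cosh (θ * y)) := by ring
      _ ≤ 2 * G := mul_le_mul_of_nonneg_left (hG y hy) zero_le_two
  calc max |φ1 x| |φ2 x| ≤ C * ω⁻¹ * (2 * G) :=
        hest R ω (2 * G) _ _ _ hR hω (by positivity) (isSolution_of_contDiffOn hR' hφ1 hφ2 heq)
          hg (Prod.ext hb1 hb2) (Prod.ext hb1' hb2') x hx
    _ = C * 2 * ω⁻¹ * G := by ring

/-- **Theorem 1.1 (main a-priori estimate).** For every `θ > 0` there exist constants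
`C, R₀, ω₀, P₀ > 0` such that whenever `R > R₀`, `ω ∈ (0, ω₀)`, `ω * R > P₀`, and
`φ = (φ1, φ2)` is a pair of `C²` functions on `[−R, R]` vanishing at `±R` with
`L_ω φ = g` on `(−R, R)`, then
`sup_{[-R,R]} max (|φ1|, |φ2|) ≤ C * ω⁻¹ * ‖g‖_{C⁰_θ((−R,R))}`. -/
theorem main_invertibility_estimate
    (V1 V2 : ℝ → ℝ)
    (hV1smooth : ContDiff ℝ (⊤ : ℕ∞) V1) (hV2smooth : ContDiff ℝ (⊤ : ℕ∞) V2)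
    (hV1pos : ∀ x : ℝ, 0 < V1 x) (hV2pos : ∀ x : ℝ, 0 < V2 x)
    (hode1 : ∀ x : ℝ, -deriv (deriv V1) x + V1 x * (V2 x) ^ 2 = 0)
    (hode2 : ∀ x : ℝ, -deriv (deriv V2) x + V2 x * (V1 x) ^ 2 = 0)
    (hV10 : V1 0 = 1) (hV20 : V2 0 = 1)
    (hsym : ∀ x : ℝ, V1 (-x) = V2 x)
    (hmono : ∀ x : ℝ, 0 < deriv V1 x)
    (A B c0 C0 : ℝ) (hA : 0 < A) (hc0 : 0 < c0) (hC0 : 0 < C0)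
    (hasym1 : ∀ x : ℝ, 0 ≤ x → |V1 x - A * x - B| ≤ C0 * Real.exp (-c0 * x ^ 2))
    (hasym2 : ∀ x : ℝ, 0 ≤ x → |deriv V1 x - A| ≤ C0 * Real.exp (-c0 * x ^ 2))
    (hasym3 : ∀ x : ℝ, 0 ≤ x → |deriv (deriv V1) x| ≤ C0 * Real.exp (-c0 * x ^ 2))
    (hasym4 : ∀ x : ℝ, x ≤ 0 →
      |V1 x| + |deriv V1 x| + |deriv (deriv V1) x| ≤ C0 * Real.exp (-c0 * x ^ 2))
    (hnondeg : ∀ ψ1 ψ2 : ℝ → ℝ, ContDiff ℝ 2 ψ1 → ContDiff ℝ 2 ψ2 →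
      (∃ Cb : ℝ, ∀ x : ℝ, |ψ1 x| ≤ Cb ∧ |ψ2 x| ≤ Cb) →
      (∀ x : ℝ, -deriv (deriv ψ1) x + (V2 x) ^ 2 * ψ1 x + 2 * V1 x * V2 x * ψ2 x = 0) →
      (∀ x : ℝ, -deriv (deriv ψ2) x + (V1 x) ^ 2 * ψ2 x + 2 * V1 x * V2 x * ψ1 x = 0) →
      ∃ lam : ℝ, (∀ x : ℝ, ψ1 x = lam * deriv V1 x) ∧ (∀ x : ℝ, ψ2 x = lam * deriv V2 x))
    (θ : ℝ) (hθ : 0 < θ) :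
    ∃ C R₀ ω₀ P₀ : ℝ, 0 < C ∧ 0 < R₀ ∧ 0 < ω₀ ∧ 0 < P₀ ∧
      ∀ R ω : ℝ, R₀ < R → ω ∈ Set.Ioo 0 ω₀ → P₀ < ω * R →
      ∀ φ1 φ2 g1 g2 : ℝ → ℝ,
        ContDiffOn ℝ 2 φ1 (Set.Icc (-R) R) → ContDiffOn ℝ 2 φ2 (Set.Icc (-R) R) →
        ContinuousOn g1 (Set.Icc (-R) R) → ContinuousOn g2 (Set.Icc (-R) R) →
        φ1 (-R) = 0 → φ1 R = 0 → φ2 (-R) = 0 → φ2 R = 0 →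
        (∀ x ∈ Set.Ioo (-R) R,
          -deriv (deriv φ1) x + ((V2 x) ^ 2 + ω ^ 2) * φ1 x + 2 * V1 x * V2 x * φ2 x = g1 x ∧
          -deriv (deriv φ2) x + ((V1 x) ^ 2 + ω ^ 2) * φ2 x + 2 * V1 x * V2 x * φ1 x = g2 x) →
        ∀ G : ℝ, (∀ x ∈ Set.Ioo (-R) R, max |g1 x| |g2 x| * Real.cosh (θ * x) ≤ G) →
        ∀ x ∈ Set.Icc (-R) R, max |φ1 x| |φ2 x| ≤ C * ω⁻¹ * G := by
  obtain ⟨C, R₀, ω₀, hC, hR₀, hω₀, hest⟩ := main_invertibility_estimate_general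
    (hV1smooth.of_le (by norm_cast)) hV1pos hode1 hsym hmono hnondeg hθ
  exact ⟨C, R₀, ω₀, 1, hC, hR₀, hω₀, one_pos,
    fun R ω hR hω _ φ1 φ2 g1 g2 hφ1 hφ2 _ _ => hest R ω hR hω φ1 φ2 g1 g2 hφ1 hφ2⟩
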